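/- arXiv:2403.17079 — 4 statements merged into one kernel-verified Lean document; each statement's English description precedes it below -/
import Mathlib

section
/- Let (Q, m, k) be a commutative Noetherian local ring and let f, g be an exact pair of zerodivisors in m, i.e. f and g are nonzero elements of m with ann_Q(f) = (g) and ann_Q(g) = (f). Set R = Q/(f). Then for every finitely generated R-module M, the curvature of M over Q is bounded as follows: limsup_{i→∞} (β_i^Q(M))^{1/i} ≤ max( limsup_{i→∞} (β_i^R(M))^{1/i}, 1 ). (That is, curv_Q(M) ≤ max{curv_R(M), 1}.) -/
open CategoryTheory TensorProduct

/-- The `i`-th Betti number of a module `M` over a local ring `A`: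
`β_i^A(M) = dim_k Tor_i^A(M, k)`, computed as the `k`-dimension of
`k ⊗_A Tor_i^A(M, k)` (the two agree since `Tor_i^A(M, k)` is a `k`-vector
space, being annihilated by the maximal ideal of `A`). -/
noncomputable def bettiNumber (A : Type) [CommRing A] [IsLocalRing A]
    (M : Type) [AddCommGroup M] [Module A M] (i : ℕ) : ℕ :=
  Module.finrank (IsLocalRing.ResidueField A)
    (IsLocalRing.ResidueField A ⊗[A]
      (((Tor (ModuleCat A) i).obj (ModuleCat.of A M)).obj
        (ModuleCat.of A (IsLocalRing.ResidueField A))))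


namespace CurvAux

open CategoryTheory.MonoidalCategory

section cat
variable {A : Type} [CommRing A]

/-- The complex `M ⊗ P`. -/
noncomputable abbrev TC {Y : ModuleCat.{0} A} (P : ProjectiveResolution Y) (M : ModuleCat.{0} A) :
    ChainComplex (ModuleCat.{0} A) ℕ :=
  (((tensoringLeft (ModuleCat.{0} A)).obj M).mapHomologicalComplex _).obj P.complex

noncomputable abbrev TCmap {Y : ModuleCat.{0} A} (P : ProjectiveResolution Y)
    {M N : ModuleCat.{0} A} (f : M ⟶ N) : TC P M ⟶ TC P N :=
  (NatTrans.mapHomologicalComplex ((tensoringLeft (ModuleCat.{0} A)).map f) _).app P.complex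

noncomputable def TCseq {Y : ModuleCat.{0} A} (P : ProjectiveResolution Y)
    (S : ShortComplex (ModuleCat.{0} A)) : ShortComplex (ChainComplex (ModuleCat.{0} A) ℕ) :=
  ShortComplex.mk (TCmap P S.f) (TCmap P S.g) (by
    ext i : 1
    change S.f ▷ _ ≫ S.g ▷ _ = 0
    rw [← comp_whiskerRight, S.zero]
    exact MonoidalPreadditive.zero_whiskerRight)

lemma TCseq_shortExact {Y : ModuleCat.{0} A} (P : ProjectiveResolution Y)
    (S : ShortComplex (ModuleCat.{0} A)) (hS : S.ShortExact) : (TCseq P S).ShortExact := by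
  apply HomologicalComplex.shortExact_of_degreewise_shortExact
  intro i
  have : Module.Projective A (P.complex.X i) := by
    have := P.projective i
    infer_instance
  have h := hS.map_of_exact (tensorRight (P.complex.X i))
  exact h

lemma TC_isZero {Y : ModuleCat.{0} A} (P : ProjectiveResolution Y) (M : ModuleCat.{0} A)
    [Module.Flat A M] (n : ℕ) : Limits.IsZero ((TC P M).homology (n + 1)) := by
  apply HomologicalComplex.ExactAt.isZero_homology
  have h : ((P.complex.sc (n + 1)).map (tensorLeft M)).Exact :=
    Module.Flat.lTensor_shortComplex_exact M _ (P.complex_exactAt_succ n)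
  exact h

/-- `H_n(M ⊗ P)`. -/
noncomputable abbrev T {Y : ModuleCat.{0} A} (P : ProjectiveResolution Y) (n : ℕ)
  (M : Type) [AddCommGroup M] [Module A M] : ModuleCat.{0} A :=
  (TC P (ModuleCat.of A M)).homology n

noncomputable def Tmap {Y : ModuleCat.{0} A} (P : ProjectiveResolution Y) (n : ℕ)
    {M N : Type} [AddCommGroup M] [Module A M] [AddCommGroup N] [Module A N] (f : M →ₗ[A] N) :
    T P n M →ₗ[A] T P n N :=
  (HomologicalComplex.homologyMap (TCmap P (ModuleCat.ofHom f)) n).hom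

noncomputable def torEquiv {Y : ModuleCat.{0} A} (P : ProjectiveResolution Y) (n : ℕ)
    (M : Type) [AddCommGroup M] [Module A M] :
    (((Tor (ModuleCat A) n).obj (ModuleCat.of A M)).obj Y) ≃ₗ[A] T P n M :=
  (P.isoLeftDerivedObj _ n).toLinearEquiv

noncomputable def T0Equiv {Y : ModuleCat.{0} A} (P : ProjectiveResolution Y)
    (M : Type) [AddCommGroup M] [Module A M] :
    T P 0 M ≃ₗ[A] (M ⊗[A] Y) :=
  (torEquiv P 0 M).symm ≪≫ₗ
  ((((tensoringLeft (ModuleCat.{0} A)).obj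
    (ModuleCat.of A M)).leftDerivedZeroIsoSelf.app Y)).toLinearEquiv

lemma T_subsingleton {Y : ModuleCat.{0} A} (P : ProjectiveResolution Y) (n : ℕ)
    (M : Type) [AddCommGroup M] [Module A M] [Module.Flat A M] : Subsingleton (T P (n+1) M) :=
  ModuleCat.subsingleton_of_isZero (TC_isZero P (ModuleCat.of A M) n)

theorem T_les {Y : ModuleCat.{0} A} (P : ProjectiveResolution Y)
    {N F M : Type} [AddCommGroup M] [Module A M] [AddCommGroup N] [Module A N]
    [AddCommGroup F] [Module A F] (i : N →ₗ[A] F) (p : F →ₗ[A] M)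
    (hi : Function.Injective i) (hp : Function.Surjective p) (hip : Function.Exact i p) (n : ℕ) :
    ∃ δ : T P (n+1) M →ₗ[A] T P n N,
      Function.Exact (Tmap P (n+1) p) δ ∧ Function.Exact δ (Tmap P n i) ∧
      Function.Exact (Tmap P n i) (Tmap P n p) := by
  let S : ShortComplex (ModuleCat.{0} A) :=
    ShortComplex.mk (ModuleCat.ofHom i) (ModuleCat.ofHom p)
      (by ext x; exact hip.apply_apply_eq_zero x)
  have hS : S.ShortExact := ModuleCat.shortComplex_shortExact S hip hi hp
  have h := TCseq_shortExact P S hS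
  refine ⟨(h.δ (n+1) n (by simp)).hom, ?_, ?_, ?_⟩
  · exact (ShortComplex.ShortExact.moduleCat_exact_iff_function_exact _).1
      (h.homology_exact₃ (n+1) n (by simp))
  · exact (ShortComplex.ShortExact.moduleCat_exact_iff_function_exact _).1
      (h.homology_exact₁ (n+1) n (by simp))
  · exact (ShortComplex.ShortExact.moduleCat_exact_iff_function_exact _).1
      (h.homology_exact₂ n)

theorem T0_surj {Y : ModuleCat.{0} A} (P : ProjectiveResolution Y)
    {F M : Type} [AddCommGroup M] [Module A M]
    [AddCommGroup F] [Module A F] (p : F →ₗ[A] M)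
    (hp : Function.Surjective p) : Function.Surjective (Tmap P 0 p) := by
  have : Epi (ModuleCat.ofHom p) := (ModuleCat.epi_iff_surjective _).mpr hp
  have h2 : Epi ((TCmap P (ModuleCat.ofHom p)).f 0) := by
    change Epi ((tensorRight (P.complex.X 0)).map (ModuleCat.ofHom p))
    infer_instance
  have h3 : Epi (HomologicalComplex.opcyclesMap (TCmap P (ModuleCat.ofHom p)) 0) := by
    have : Epi ((TC P (ModuleCat.of A F)).pOpcycles 0 ≫
      HomologicalComplex.opcyclesMap (TCmap P (ModuleCat.ofHom p)) 0) := by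
      rw [HomologicalComplex.p_opcyclesMap]
      exact epi_comp _ _
    exact epi_of_epi ((TC P (ModuleCat.of A F)).pOpcycles 0) _
  have h4 : Epi (HomologicalComplex.homologyMap (TCmap P (ModuleCat.ofHom p)) 0) := by
    have e := ChainComplex.isoHomologyι₀_inv_naturality (TCmap P (ModuleCat.ofHom p))
    have : Epi ((TC P (ModuleCat.of A F)).isoHomologyι₀.inv ≫
      HomologicalComplex.homologyMap (TCmap P (ModuleCat.ofHom p)) 0) := by
      rw [e]; exact epi_comp _ _
    exact epi_of_epi ((TC P (ModuleCat.of A F)).isoHomologyι₀.inv) _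
  exact (ModuleCat.epi_iff_surjective _).mp h4

end cat

section len

lemma length_le_of_exact {A X Y Z : Type} [CommRing A] [AddCommGroup X] [Module A X]
    [AddCommGroup Y] [Module A Y] [AddCommGroup Z] [Module A Z]
    (u : X →ₗ[A] Y) (v : Y →ₗ[A] Z) (h : Function.Exact u v) :
    Module.length A Y ≤ Module.length A X + Module.length A Z := by
  have e : Module.length A Y = Module.length A (LinearMap.ker v) +
      Module.length A (LinearMap.range v) :=
    Module.length_eq_add_of_exact (LinearMap.ker v).subtype v.rangeRestrict
      (Submodule.injective_subtype _) v.surjective_rangeRestrict (by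
        rw [LinearMap.exact_iff, LinearMap.ker_rangeRestrict, Submodule.range_subtype])
  rw [e]
  gcongr
  · rw [LinearMap.exact_iff.1 h]
    exact Module.length_le_of_surjective u.rangeRestrict u.surjective_rangeRestrict
  · exact Module.length_le_of_injective (LinearMap.range v).subtype (Submodule.injective_subtype _)

lemma finrank_eq_length {A X : Type} [CommRing A] [IsLocalRing A] [AddCommGroup X] [Module A X]
    [Module.Finite A X] (h : ∀ a ∈ IsLocalRing.maximalIdeal A, ∀ x : X, a • x = 0) :
    ((Module.finrank (IsLocalRing.ResidueField A) (IsLocalRing.ResidueField A ⊗[A] X) : ℕ) : ℕ∞)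
      = Module.length A X := by
  rw [← Module.length_eq_finrank, ← Module.length_eq_of_surjective (S := A)
    (IsLocalRing.residue_surjective)]
  have hbot : (IsLocalRing.maximalIdeal A) • (⊤ : Submodule A X) = ⊥ := by
    rw [eq_bot_iff, Submodule.smul_le]
    intro a ha x _
    simp [h a ha x]
  let e : (IsLocalRing.ResidueField A ⊗[A] X) ≃ₗ[A] X :=
    TensorProduct.quotTensorEquivQuotSMul X (IsLocalRing.maximalIdeal A) ≪≫ₗ
      Submodule.quotEquivOfEqBot _ hbot
  exact e.length_eq

end len

section loc
variable (A : Type) [CommRing A] [IsLocalRing A]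

noncomputable abbrev PR : ProjectiveResolution (ModuleCat.of A (IsLocalRing.ResidueField A)) :=
  projectiveResolution _

noncomputable def L (n : ℕ) (M : Type) [AddCommGroup M] [Module A M] : ℕ∞ :=
  Module.length A (T (PR A) n M)

lemma killed [IsNoetherianRing A] (n : ℕ) : ∀ (M : Type) [AddCommGroup M] [Module A M]
    [Module.Finite A M],
    Module.Finite A (T (PR A) n M) ∧
      ∀ a ∈ IsLocalRing.maximalIdeal A, ∀ x : T (PR A) n M, a • x = 0 := by
  induction n with
  | zero =>
    intro M _ _ _
    have e : T (PR A) 0 M ≃ₗ[A] (M ⊗[A] IsLocalRing.ResidueField A) := T0Equiv (PR A) M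
    refine ⟨Module.Finite.equiv e.symm, fun a ha x => ?_⟩
    apply e.injective
    rw [map_smul, map_zero]
    induction e x using TensorProduct.induction_on with
    | zero => simp
    | add x y hx hy => rw [smul_add, hx, hy, add_zero]
    | tmul m y =>
      rw [← TensorProduct.tmul_smul]
      have : a • y = 0 := by
        rw [Algebra.smul_def]
        have : algebraMap A (IsLocalRing.ResidueField A) a = 0 :=
          (IsLocalRing.residue_eq_zero_iff a).2 ha
        rw [this, zero_mul]
      rw [this, TensorProduct.tmul_zero]
  | succ n ih =>
    intro M _ _ _
    obtain ⟨b, p, hp⟩ := Module.Finite.exists_fin' A M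
    obtain ⟨δ, h1, h2, -⟩ := T_les (PR A) (LinearMap.ker p).subtype p
      (Submodule.injective_subtype _) hp (LinearMap.exact_subtype_ker_map p) n
    have := T_subsingleton (PR A) n (Fin b → A)
    have hinj : Function.Injective δ := by
      rw [injective_iff_map_eq_zero]
      intro x hx
      obtain ⟨y, rfl⟩ := (h1 x).1 hx
      rw [Subsingleton.elim y 0, map_zero]
    obtain ⟨i1, i2⟩ := ih (LinearMap.ker p)
    refine ⟨Module.Finite.of_injective δ hinj, fun a ha x => ?_⟩
    apply hinj
    rw [map_smul, map_zero, i2 a ha]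

lemma betti_eq [IsNoetherianRing A] (n : ℕ) (M : Type) [AddCommGroup M] [Module A M]
    [Module.Finite A M] : (bettiNumber A M n : ℕ∞) = L A n M := by
  obtain ⟨h1, h2⟩ := killed A n M
  let e := torEquiv (PR A) n M
  have := Module.Finite.equiv e.symm
  rw [L, ← e.length_eq, bettiNumber]
  apply finrank_eq_length
  intro a ha x
  apply e.injective
  rw [map_smul, map_zero, h2 a ha]

lemma L_free_zero (b : ℕ) : L A 0 (Fin b → A) ≤ b := by
  have e : T (PR A) 0 (Fin b → A) ≃ₗ[A] ((Fin b → A) ⊗[A] IsLocalRing.ResidueField A) :=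
    T0Equiv (PR A) _
  have e2 : T (PR A) 0 (Fin b → A) ≃ₗ[A] (Fin b → IsLocalRing.ResidueField A) :=
    e ≪≫ₗ TensorProduct.comm _ _ _ ≪≫ₗ TensorProduct.piScalarRight A A _ _
  rw [L, e2.length_eq, Module.length_pi_of_fintype,
    Module.length_eq_of_surjective (R := IsLocalRing.ResidueField A) IsLocalRing.residue_surjective,
    Module.length_eq_finrank]
  simp

lemma L_free_succ (n b : ℕ) : L A (n+1) (Fin b → A) = 0 := by
  have := T_subsingleton (PR A) n (Fin b → A)
  exact Module.length_eq_zero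

variable {A}

lemma L_les {N F M : Type} [AddCommGroup M] [Module A M] [AddCommGroup N] [Module A N]
    [AddCommGroup F] [Module A F] (i : N →ₗ[A] F) (p : F →ₗ[A] M)
    (hi : Function.Injective i) (hp : Function.Surjective p) (hip : Function.Exact i p) (n : ℕ) :
    L A (n+1) M ≤ L A (n+1) F + L A n N ∧ L A n N ≤ L A (n+1) M + L A n F := by
  obtain ⟨δ, h1, h2, h3⟩ := T_les (PR A) i p hi hp hip n
  exact ⟨length_le_of_exact _ _ h1, length_le_of_exact _ _ h2⟩

lemma L_surj {F M : Type} [AddCommGroup M] [Module A M]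
    [AddCommGroup F] [Module A F] (p : F →ₗ[A] M) (hp : Function.Surjective p) :
    L A 0 M ≤ L A 0 F :=
  Module.length_le_of_surjective _ (T0_surj (PR A) p hp)

lemma L_min {N F M : Type} [AddCommGroup M] [Module A M] [AddCommGroup N] [Module A N]
    [AddCommGroup F] [Module A F] (i : N →ₗ[A] F) (p : F →ₗ[A] M)
    (hi : Function.Injective i) (hp : Function.Surjective p) (hip : Function.Exact i p)
    (h : L A 0 F ≤ L A 0 M) (hfin : L A 0 M ≠ ⊤) : L A 0 N ≤ L A 1 M := by
  obtain ⟨δ, -, h2, h3⟩ := T_les (PR A) i p hi hp hip 0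
  have e : Module.length A (T (PR A) 0 F) = Module.length A (LinearMap.ker (Tmap (PR A) 0 p)) +
      Module.length A (T (PR A) 0 M) :=
    Module.length_eq_add_of_exact (LinearMap.ker (Tmap (PR A) 0 p)).subtype (Tmap (PR A) 0 p)
      (Submodule.injective_subtype _) (T0_surj _ p hp) (LinearMap.exact_subtype_ker_map _)
  have hk : Module.length A (LinearMap.ker (Tmap (PR A) 0 p)) = 0 := by
    unfold L at h hfin
    rw [e] at h
    have h' : Module.length A (LinearMap.ker (Tmap (PR A) 0 p)) + Module.length A (T (PR A) 0 M) ≤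
      0 + Module.length A (T (PR A) 0 M) := by rwa [zero_add]
    exact le_antisymm ((ENat.add_le_add_iff_right hfin).1 h') bot_le
  rw [Module.length_eq_zero_iff, Submodule.subsingleton_iff_eq_bot] at hk
  apply Module.length_le_of_surjective δ
  intro x
  apply (h2 x).1
  have : Tmap (PR A) 0 i x ∈ LinearMap.ker (Tmap (PR A) 0 p) := h3.apply_apply_eq_zero x
  rw [hk] at this
  exact this

end loc

lemma L_quot {Q : Type} [CommRing Q] [IsLocalRing Q] (b n : ℕ) : ∀ (f g : Q)
    (_ : ∀ x : Q, x * f = 0 ↔ x ∈ Ideal.span {g})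
    (_ : ∀ x : Q, x * g = 0 ↔ x ∈ Ideal.span {f}),
    L Q n (Fin b → Q ⧸ Ideal.span {f}) ≤ b := by
  induction n with
  | zero =>
    intro f g _ _
    refine (L_surj ((Submodule.mkQ (Ideal.span {f})).compLeft (Fin b)) ?_).trans (L_free_zero Q b)
    exact (Submodule.mkQ_surjective _).comp_left
  | succ n ih =>
    intro f g hf hg
    have hker : ∀ x ∈ Ideal.span {g}, (LinearMap.mulRight Q f) x = 0 := fun x hx => (hf x).2 hx
    let i : (Q ⧸ Ideal.span {g}) →ₗ[Q] Q :=
      Submodule.liftQ (Ideal.span {g}) (LinearMap.mulRight Q f) hker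
    have hi : Function.Injective i := by
      rw [← LinearMap.ker_eq_bot]
      apply Submodule.ker_liftQ_eq_bot
      intro x hx
      exact (hf x).1 hx
    have hip : Function.Exact i (Submodule.mkQ (Ideal.span {f})) := by
      rw [LinearMap.exact_iff, Submodule.ker_mkQ, show LinearMap.range i = LinearMap.range (LinearMap.mulRight Q f) from
        Submodule.range_liftQ _ _ _]
      ext x
      simp [Ideal.mem_span_singleton', eq_comm]
    have := (L_les (i.compLeft (Fin b)) ((Submodule.mkQ (Ideal.span {f})).compLeft (Fin b))
      hi.comp_left (Submodule.mkQ_surjective _).comp_left (by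
        intro y
        constructor
        · intro hy
          have : ∀ j, ∃ z, i z = y j := fun j => (hip (y j)).1 (congrFun hy j)
          choose z hz using this
          exact ⟨z, funext hz⟩
        · rintro ⟨z, rfl⟩
          funext j
          exact hip.apply_apply_eq_zero (z j)) n).1
    rw [L_free_succ, zero_add] at this
    exact this.trans (ih g f hg hf)

/-- Minimal free cover. -/
lemma exists_min_cover (R : Type) [CommRing R] [IsLocalRing R] (M : Type) [AddCommGroup M]
    [Module R M] [Module.Finite R M] :
    ∃ (b : ℕ) (p : (Fin b → R) →ₗ[R] M), Function.Surjective p ∧ L R 0 M = b := by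
  let k := IsLocalRing.ResidueField R
  let bs := Module.finBasis k (k ⊗[R] M)
  have hs : Function.Surjective (TensorProduct.mk R k M 1) :=
    TensorProduct.mk_surjective R M k IsLocalRing.residue_surjective
  choose v hv using fun j => hs (bs j)
  have hspan := IsLocalRing.span_eq_top_of_tmul_eq_basis v bs hv
  refine ⟨_, Fintype.linearCombination R v, ?_, ?_⟩
  · rw [← LinearMap.range_eq_top, Fintype.range_linearCombination, hspan]
  · have e : T (PR R) 0 M ≃ₗ[R] (M ⊗[R] k) := T0Equiv (PR R) _
    rw [L, e.length_eq, (TensorProduct.comm R M k).length_eq,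
      Module.length_eq_of_surjective (R := k) IsLocalRing.residue_surjective,
      Module.length_eq_finrank]

theorem main_ineq (Q : Type) [CommRing Q] [IsNoetherianRing Q] [IsLocalRing Q]
    (f g : Q)
    (hannf : ∀ x : Q, x * f = 0 ↔ x ∈ Ideal.span {g})
    (hanng : ∀ x : Q, x * g = 0 ↔ x ∈ Ideal.span {f})
    [IsLocalRing (Q ⧸ Ideal.span {f})] (n : ℕ) :
    ∀ (M : Type) [AddCommGroup M] [Module Q M] [Module (Q ⧸ Ideal.span {f}) M]
    [IsScalarTower Q (Q ⧸ Ideal.span {f}) M]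
    [Module.Finite (Q ⧸ Ideal.span {f}) M],
    L Q n M ≤ ∑ j ∈ Finset.range (n+1), L (Q ⧸ Ideal.span {f}) j M := by
  induction n with
  | zero =>
    intro M _ _ _ _ _
    obtain ⟨b, p, hp, hb⟩ := exists_min_cover (Q ⧸ Ideal.span {f}) M
    rw [zero_add, Finset.sum_range_one, hb]
    exact (L_surj (p.restrictScalars Q) hp).trans (L_quot b 0 f g hannf hanng)
  | succ n ih =>
    intro M _ _ _ _ _
    obtain ⟨b, p, hp, hb⟩ := exists_min_cover (Q ⧸ Ideal.span {f}) M
    have hex := LinearMap.exact_subtype_ker_map p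
    have h1 := (L_les (A := Q) ((LinearMap.ker p).subtype.restrictScalars Q) (p.restrictScalars Q)
      (Submodule.injective_subtype _) hp hex n).1
    have h2 := L_quot b (n+1) f g hannf hanng
    have h3 := ih (LinearMap.ker p)
    have h4 : ∀ j, L (Q ⧸ Ideal.span {f}) j (LinearMap.ker p) ≤
        L (Q ⧸ Ideal.span {f}) (j+1) M := by
      intro j
      cases j with
      | zero =>
        apply L_min (LinearMap.ker p).subtype p (Submodule.injective_subtype _) hp hex
        · rw [hb]; exact L_free_zero _ b
        · rw [hb]; exact ENat.natCast_ne_top b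
      | succ j =>
        have := (L_les (LinearMap.ker p).subtype p (Submodule.injective_subtype _) hp hex (j+1)).2
        rwa [L_free_succ, add_zero] at this
    rw [Finset.sum_range_succ', hb]
    refine (h1.trans (add_le_add h2 (h3.trans (Finset.sum_le_sum fun j _ => h4 j)))).trans ?_
    exact (add_comm _ _).le

open Filter
theorem analysis (b r : ℕ → ℕ) (h : ∀ n, b n ≤ ∑ j ∈ Finset.range (n+1), r j) :
   Filter.limsup (fun i : ℕ => (b i : ENNReal) ^ (1 / (i : ℝ))) Filter.atTop ≤
      max (Filter.limsup (fun i : ℕ => (r i : ENNReal) ^ (1 / (i : ℝ))) Filter.atTop) 1 := by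
  apply le_of_forall_gt_imp_ge_of_dense
  intro c hc
  rw [max_lt_iff] at hc
  obtain ⟨hc1, hc2⟩ := hc
  have ev := Filter.eventually_lt_of_limsup_lt hc1
  obtain ⟨N, hN⟩ := eventually_atTop.1 ev
  set C : ℕ := ∑ j ∈ Finset.range (N+1), r j with hC
  have key : ∀ n, (b n : ENNReal) ≤ ((C + n + 1 : ℕ) : ENNReal) * c ^ n := by
    intro n
    have h1 : ∀ j ∈ Finset.range (n+1), (r j : ENNReal) ≤
        ((if j ∈ Finset.range (N+1) then r j else 0 : ℕ) : ENNReal) + c ^ n := by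
      intro j hj
      by_cases hjN : j ∈ Finset.range (N+1)
      · simp only [hjN, if_true]; exact le_self_add
      · have hjN' : N < j := by simpa using hjN
        have hj' : j ≤ n := by simpa [Nat.lt_succ_iff] using hj
        have h2 := (hN j hjN'.le).le
        have h3 : (r j : ENNReal) ≤ c ^ j := by
          have hj0 : (j : ℝ) ≠ 0 := by
            have : j ≠ 0 := by omega
            exact_mod_cast this
          have := ENNReal.rpow_le_rpow h2 (Nat.cast_nonneg j : (0:ℝ) ≤ j)
          rwa [← ENNReal.rpow_mul, one_div, inv_mul_cancel₀ hj0, ENNReal.rpow_one,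
            ENNReal.rpow_natCast] at this
        exact (h3.trans (pow_le_pow_right₀ hc2.le hj')).trans le_add_self
    calc (b n : ENNReal) ≤ ((∑ j ∈ Finset.range (n+1), r j : ℕ) : ENNReal) := by
          exact_mod_cast h n
      _ = ∑ j ∈ Finset.range (n+1), (r j : ENNReal) := by push_cast; rfl
      _ ≤ ∑ j ∈ Finset.range (n+1),
        (((if j ∈ Finset.range (N+1) then r j else 0 : ℕ) : ENNReal) + c ^ n) :=
          Finset.sum_le_sum h1
      _ = ((∑ j ∈ Finset.range (n+1), (if j ∈ Finset.range (N+1) then r j else 0) : ℕ) : ENNReal)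
          + (n+1 : ℕ) * c ^ n := by
          rw [Finset.sum_add_distrib]; simp
      _ ≤ (C : ENNReal) * c ^ n + (n+1 : ℕ) * c ^ n := by
          gcongr
          have h5 : (∑ j ∈ Finset.range (n+1), (if j ∈ Finset.range (N+1) then r j else 0)) ≤ C := by
            rw [← Finset.sum_filter, hC]
            apply Finset.sum_le_sum_of_subset
            intro x hx
            exact (Finset.mem_filter.1 hx).2
          calc _ ≤ (C : ENNReal) * 1 := by rw [mul_one]; exact_mod_cast h5
            _ ≤ _ := by gcongr; exact one_le_pow₀ hc2.le
      _ = _ := by push_cast; ring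
  by_cases hct : c = ⊤
  · rw [hct]; exact le_top
  have lim : Tendsto (fun n : ℕ => ((C + n + 1 : ℕ) : ENNReal) ^ (1 / (n : ℝ)) * c) atTop
      (nhds (1 * c)) := by
    apply ENNReal.Tendsto.mul_const _ (Or.inr hct)
    have t1 := tendsto_rpow_div_mul_add 1 1 (-(C+1 : ℝ)) (by norm_num)
    have t2 : Tendsto (fun n : ℕ => ((C + n + 1 : ℕ) : ℝ)) atTop atTop := by
      apply tendsto_natCast_atTop_atTop.comp
      exact tendsto_atTop_mono (fun n => by simp only [id]; omega) tendsto_id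
    have t3 := ENNReal.tendsto_ofReal (t1.comp t2)
    rw [ENNReal.ofReal_one] at t3
    refine t3.congr (fun n => ?_)
    simp only [Function.comp]
    rw [← ENNReal.ofReal_rpow_of_pos (by positivity), ENNReal.ofReal_natCast]
    congr 2
    push_cast; ring
  rw [one_mul] at lim
  rw [← lim.limsup_eq]
  apply Filter.limsup_le_limsup
  · filter_upwards [eventually_gt_atTop 0] with n hn
    have hn0 : (n : ℝ) ≠ 0 := by exact_mod_cast hn.ne'
    refine (ENNReal.rpow_le_rpow (key n) (by positivity)).trans ?_
    rw [ENNReal.mul_rpow_of_nonneg _ _ (by positivity), ← ENNReal.rpow_natCast, ← ENNReal.rpow_mul,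
      mul_one_div_cancel hn0, ENNReal.rpow_one]
  · isBoundedDefault
  · isBoundedDefault
end CurvAux

/-- **Curvature bound.** Let `f, g` be an exact pair of zerodivisors in the
maximal ideal of a Noetherian local ring `Q` and set `R = Q/(f)`. Then for every
finitely generated `R`-module `M`,
`curv_Q(M) = limsup (β_i^Q(M))^{1/i} ≤ max{curv_R(M), 1}`. -/
theorem curvature_le_of_exact_zerodivisor
    (Q : Type) [CommRing Q] [IsNoetherianRing Q] [IsLocalRing Q]
    (f g : Q) (hf0 : f ≠ 0) (hg0 : g ≠ 0)
    (hfm : f ∈ IsLocalRing.maximalIdeal Q) (hgm : g ∈ IsLocalRing.maximalIdeal Q)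
    (hannf : ∀ x : Q, x * f = 0 ↔ x ∈ Ideal.span {g})
    (hanng : ∀ x : Q, x * g = 0 ↔ x ∈ Ideal.span {f})
    [IsLocalRing (Q ⧸ Ideal.span {f})]
    (M : Type) [AddCommGroup M] [Module Q M] [Module (Q ⧸ Ideal.span {f}) M]
    [IsScalarTower Q (Q ⧸ Ideal.span {f}) M]
    [Module.Finite (Q ⧸ Ideal.span {f}) M] :
    Filter.limsup (fun i : ℕ => (bettiNumber Q M i : ENNReal) ^ (1 / (i : ℝ)))
        Filter.atTop ≤
      max (Filter.limsup
        (fun i : ℕ => (bettiNumber (Q ⧸ Ideal.span {f}) M i : ENNReal) ^ (1 / (i : ℝ)))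
        Filter.atTop) 1 := by
  have hQ : Module.Finite Q M := Module.Finite.trans (Q ⧸ Ideal.span {f}) M
  apply CurvAux.analysis
  intro n
  have h := CurvAux.main_ineq Q f g hannf hanng n M
  rw [← CurvAux.betti_eq] at h
  simp only [← CurvAux.betti_eq] at h
  exact_mod_cast h
end

section
/- Let (Q, m, k) be a commutative Noetherian local ring and let f, g be an exact pair of zerodivisors in m, i.e. f and g are nonzero elements of m with ann_Q(f) = (g) and ann_Q(g) = (f). Set R = Q/(f). Let M be a finitely generated R-module and let d ≥ 1 be an integer. If there exists a real constant c such that β_i^R(M) ≤ c·(i+1)^{d−1} for all i ≥ 0, then there exists a real constant c' such that β_i^Q(M) ≤ c'·(i+1)^{d} for all i ≥ 0. (That is, the complexity satisfies cx_Q(M) ≤ cx_R(M) + 1.) -/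
open CategoryTheory TensorProduct

/-- Tor as a bare object. -/
noncomputable abbrev TT (A : Type) [CommRing A] (X M : Type) [AddCommGroup X] [Module A X]
    [AddCommGroup M] [Module A M] (i : ℕ) : ModuleCat.{0} A :=
  ((Tor (ModuleCat A) i).obj (ModuleCat.of A M)).obj (ModuleCat.of A X)

noncomputable abbrev tensC (A : Type) [CommRing A] (P : ChainComplex (ModuleCat.{0} A) ℕ) (M : ModuleCat.{0} A) :
   ChainComplex (ModuleCat.{0} A) ℕ :=
  (((MonoidalCategory.tensoringLeft (ModuleCat.{0} A)).obj M).mapHomologicalComplex _).obj P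

noncomputable def TTiso (A : Type) [CommRing A] (X M : Type) [AddCommGroup X] [Module A X]
    [AddCommGroup M] [Module A M] (i : ℕ) (P : ProjectiveResolution (ModuleCat.of A X)) :
    TT A X M i ≃ₗ[A] (tensC A P.complex (ModuleCat.of A M)).homology i :=
  (P.isoLeftDerivedObj ((MonoidalCategory.tensoringLeft (ModuleCat.{0} A)).obj (ModuleCat.of A M)) i).toLinearEquiv

noncomputable def TTzero (A : Type) [CommRing A] (X M : Type) [AddCommGroup X] [Module A X]
    [AddCommGroup M] [Module A M]  :
    TT A X M 0 ≃ₗ[A] M ⊗[A] X :=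
  (((MonoidalCategory.tensorLeft (ModuleCat.of A M)).leftDerivedZeroIsoSelf).app (ModuleCat.of A X)).toLinearEquiv

theorem TT_flat (A : Type) [CommRing A] (X M : Type) [AddCommGroup X] [Module A X]
    [AddCommGroup M] [Module A M] [Module.Flat A M] (i : ℕ) : Subsingleton (TT A X M (i+1)) := by
  let P := ProjectiveResolution.of (ModuleCat.of A X)
  refine (TTiso A X M (i+1) P).toEquiv.subsingleton_congr.2 ?_
  have h : (tensC A P.complex (ModuleCat.of A M)).ExactAt (i+1) := by
    rw [HomologicalComplex.exactAt_iff' _ (i + 2) (i + 1) i (by simp) (by simp)]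
    have h0 := (ShortComplex.ShortExact.moduleCat_exact_iff_function_exact _).1 (P.exact_succ i)
    rw [ShortComplex.ShortExact.moduleCat_exact_iff_function_exact]
    change Function.Exact (LinearMap.lTensor M (P.complex.d (i + 2) (i + 1)).hom)
      (LinearMap.lTensor M (P.complex.d (i + 1) i).hom)
    exact Module.Flat.lTensor_exact M h0
  exact ModuleCat.subsingleton_of_isZero h.isZero_homology

theorem TT_les (A : Type) [CommRing A] (X N F M : Type) [AddCommGroup X] [Module A X]
    [AddCommGroup N] [Module A N] [AddCommGroup F] [Module A F]
    [AddCommGroup M] [Module A M] (u : N →ₗ[A] F) (v : F →ₗ[A] M) (hu : Function.Injective u)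
    (huv : Function.Exact u v) (hv : Function.Surjective v) :
    ∃ (a : ∀ i, TT A X N i →ₗ[A] TT A X F i) (b : ∀ i, TT A X F i →ₗ[A] TT A X M i)
      (δ : ∀ i, TT A X M (i+1) →ₗ[A] TT A X N i),
      (∀ i, Function.Exact (a i) (b i)) ∧ (∀ i, Function.Exact (b (i+1)) (δ i)) ∧
      (∀ i, Function.Exact (δ i) (a i)) ∧ Function.Surjective (b 0) := by
  let P := ProjectiveResolution.of (ModuleCat.of A X)
  let fu : tensC A P.complex (ModuleCat.of A N) ⟶ tensC A P.complex (ModuleCat.of A F) :=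
    (NatTrans.mapHomologicalComplex ((MonoidalCategory.tensoringLeft (ModuleCat.{0} A)).map (ModuleCat.ofHom u)) _).app P.complex
  let fv : tensC A P.complex (ModuleCat.of A F) ⟶ tensC A P.complex (ModuleCat.of A M) :=
    (NatTrans.mapHomologicalComplex ((MonoidalCategory.tensoringLeft (ModuleCat.{0} A)).map (ModuleCat.ofHom v)) _).app P.complex
  have hfu : ∀ i, (fu.f i).hom = LinearMap.rTensor (P.complex.X i) u := fun i => rfl
  have hfv : ∀ i, (fv.f i).hom = LinearMap.rTensor (P.complex.X i) v := fun i => rfl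
  have hex : ∀ i, Function.Exact (fu.f i).hom (fv.f i).hom := fun i => by
    rw [hfu, hfv]
    exact rTensor_exact _ huv hv
  have h0 : fu ≫ fv = 0 := by
    ext i : 2
    ext x
    exact (hex i).apply_apply_eq_zero x
  let S : ShortComplex (ChainComplex (ModuleCat.{0} A) ℕ) := ShortComplex.mk fu fv h0
  have hfl : ∀ i, Module.Flat A (P.complex.X i) := fun i => by
    have : Module.Projective A (P.complex.X i) :=
      (IsProjective.iff_projective (R := A) (P.complex.X i)).2 (P.projective i)
    infer_instance
  have hS : S.ShortExact := by
    apply HomologicalComplex.shortExact_of_degreewise_shortExact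
    intro i
    have := hfl i
    refine { exact := ?_, mono_f := ?_, epi_g := ?_ }
    · rw [ShortComplex.ShortExact.moduleCat_exact_iff_function_exact]
      exact hex i
    · rw [ModuleCat.mono_iff_injective]
      exact Module.Flat.rTensor_preserves_injective_linearMap u hu
    · rw [ModuleCat.epi_iff_surjective]
      exact LinearMap.rTensor_surjective _ hv
  let eN := fun i => TTiso A X N i P
  let eF := fun i => TTiso A X F i P
  let eM := fun i => TTiso A X M i P
  have rel : ∀ i : ℕ, (ComplexShape.down ℕ).Rel (i+1) i := fun i => rfl
  have key : ∀ {B C D B' C' D' : Type} [AddCommGroup B] [AddCommGroup C] [AddCommGroup D]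
      [AddCommGroup B'] [AddCommGroup C'] [AddCommGroup D'] [Module A B] [Module A C] [Module A D]
      [Module A B'] [Module A C'] [Module A D'] (e1 : B ≃ₗ[A] B') (e2 : C ≃ₗ[A] C')
      (e3 : D ≃ₗ[A] D') (p : B' →ₗ[A] C') (q : C' →ₗ[A] D'), Function.Exact p q →
      Function.Exact (e2.symm.toLinearMap ∘ₗ p ∘ₗ e1.toLinearMap)
        (e3.symm.toLinearMap ∘ₗ q ∘ₗ e2.toLinearMap) := by
    intro B C D B' C' D' _ _ _ _ _ _ _ _ _ _ _ _ e1 e2 e3 p q h x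
    have := h (e2 x)
    simp only [LinearMap.comp_apply, LinearEquiv.coe_coe, EmbeddingLike.map_eq_zero_iff, this,
      Set.mem_range]
    constructor
    · rintro ⟨y, hy⟩
      exact ⟨e1.symm y, by simp [hy]⟩
    · rintro ⟨y, hy⟩
      exact ⟨e1 y, by simp [← hy]⟩
  refine ⟨fun i => (eF i).symm.toLinearMap ∘ₗ (HomologicalComplex.homologyMap fu i).hom ∘ₗ (eN i).toLinearMap,
    fun i => (eM i).symm.toLinearMap ∘ₗ (HomologicalComplex.homologyMap fv i).hom ∘ₗ (eF i).toLinearMap,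
    fun i => (eN i).symm.toLinearMap ∘ₗ (hS.δ (i+1) i (rel i)).hom ∘ₗ (eM (i+1)).toLinearMap,
    fun i => ?_, fun i => ?_, fun i => ?_, ?_⟩
  · exact key _ _ _ _ _ ((ShortComplex.ShortExact.moduleCat_exact_iff_function_exact _).1
      (hS.homology_exact₂ i))
  · exact key _ _ _ _ _ ((ShortComplex.ShortExact.moduleCat_exact_iff_function_exact _).1
      (hS.homology_exact₃ (i+1) i (rel i)))
  · exact key _ _ _ _ _ ((ShortComplex.ShortExact.moduleCat_exact_iff_function_exact _).1
      (hS.homology_exact₁ (i+1) i (rel i)))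
  · have : ∀ i, Epi (fv.f i) := fun i => by
      rw [ModuleCat.epi_iff_surjective]
      exact LinearMap.rTensor_surjective _ hv
    have h : Epi (HomologicalComplex.homologyMap fv 0) :=
      HomologicalComplex.epi_homologyMap_of_epi_of_not_rel fv 0 (by simp)
    rw [ModuleCat.epi_iff_surjective] at h
    exact (eM 0).symm.surjective.comp (h.comp (eF 0).surjective)

theorem len3 {A B C D : Type} [CommRing A] [AddCommGroup B] [AddCommGroup C] [AddCommGroup D]
    [Module A B] [Module A C] [Module A D] (p : B →ₗ[A] C) (q : C →ₗ[A] D)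
    (h : Function.Exact p q) :
    Module.length A C ≤ Module.length A B + Module.length A D := by
  rw [Module.length_eq_add_of_exact (LinearMap.ker q).subtype q.rangeRestrict
    (Submodule.subtype_injective _) q.surjective_rangeRestrict
    (by intro x; simp [Subtype.ext_iff])]
  refine add_le_add ?_ (Module.length_le_of_injective _ (Submodule.subtype_injective _))
  rw [LinearMap.exact_iff.1 h]
  exact Module.length_le_of_surjective _ p.surjective_rangeRestrict

theorem len4 {A B C D E : Type} [CommRing A] [AddCommGroup B] [AddCommGroup C] [AddCommGroup D]
    [AddCommGroup E] [Module A E]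
    [Module A B] [Module A C] [Module A D] (p : B →ₗ[A] C) (q : C →ₗ[A] D) (r : D →ₗ[A] E)
    (h : Function.Exact p q) (h' : Function.Exact q r) (hr : Function.Surjective r) :
    Module.length A C + Module.length A E ≤ Module.length A B + Module.length A D := by
  rw [Module.length_eq_add_of_exact (LinearMap.ker q).subtype q.rangeRestrict
    (Submodule.subtype_injective _) q.surjective_rangeRestrict
    (by intro x; simp [Subtype.ext_iff])]
  rw [Module.length_eq_add_of_exact (LinearMap.range q).subtype r
    (Submodule.subtype_injective _) hr
    (by intro x; rw [h' x]; simp), ← add_assoc]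
  gcongr
  rw [LinearMap.exact_iff.1 h]
  exact Module.length_le_of_surjective _ p.surjective_rangeRestrict

noncomputable abbrev LL (A : Type) [CommRing A] [IsLocalRing A] (M : Type)
    [AddCommGroup M] [Module A M] (i : ℕ) : ℕ∞ :=
  Module.length A (TT A (IsLocalRing.ResidueField A) M i)

theorem residue_len (A : Type) [CommRing A] [IsLocalRing A] :
    Module.length A (IsLocalRing.ResidueField A) = 1 := by
  rw [Module.length_eq_of_surjective (R := IsLocalRing.ResidueField A)
    IsLocalRing.residue_surjective]
  simp

theorem betti_le (A : Type) [CommRing A] [IsLocalRing A] (M : Type)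
    [AddCommGroup M] [Module A M] (i : ℕ) : (bettiNumber A M i : ℕ∞) ≤ LL A M i := by
  let T := TT A (IsLocalRing.ResidueField A) M i
  change (Module.finrank (IsLocalRing.ResidueField A) (IsLocalRing.ResidueField A ⊗[A] T) : ℕ∞) ≤
    Module.length A T
  calc _ ≤ Module.length (IsLocalRing.ResidueField A) (IsLocalRing.ResidueField A ⊗[A] T) := by
        rw [Module.length_eq_rank, Module.finrank]
        by_cases h : Module.rank (IsLocalRing.ResidueField A)
            (IsLocalRing.ResidueField A ⊗[A] T) < Cardinal.aleph0
        · obtain ⟨n, hn⟩ := Cardinal.lt_aleph0.1 h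
          rw [hn]
          simp
        · rw [Cardinal.toNat_apply_of_aleph0_le (not_lt.1 h)]
          simp
    _ = Module.length A (IsLocalRing.ResidueField A ⊗[A] T) :=
        (Module.length_eq_of_surjective IsLocalRing.residue_surjective).symm
    _ ≤ _ := Module.length_le_of_surjective (TensorProduct.mk A (IsLocalRing.ResidueField A) T 1)
        (TensorProduct.mk_surjective A T _ IsLocalRing.residue_surjective)

theorem TT_killed (A : Type) [CommRing A] [IsLocalRing A] (i : ℕ) : ∀ (M : Type)
    [AddCommGroup M] [Module A M] (a : A) (_ : a ∈ IsLocalRing.maximalIdeal A)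
    (x : TT A (IsLocalRing.ResidueField A) M i), a • x = 0 := by
  induction i with
  | zero =>
    intro M _ _ a ha x
    apply (TTzero A (IsLocalRing.ResidueField A) M).injective
    rw [map_smul, map_zero]
    generalize TTzero A (IsLocalRing.ResidueField A) M x = y
    induction y with
    | zero => simp
    | add y z hy hz => rw [smul_add, hy, hz, add_zero]
    | tmul m t =>
      rw [← TensorProduct.tmul_smul, Algebra.smul_def]
      have : algebraMap A (IsLocalRing.ResidueField A) a = 0 := (IsLocalRing.residue_eq_zero_iff a).2 ha
      rw [this, zero_mul, TensorProduct.tmul_zero]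
  | succ i ih =>
    intro M _ _ a ha x
    obtain ⟨_, b, δ, -, h, -, -⟩ := TT_les A (IsLocalRing.ResidueField A)
      (LinearMap.ker (Finsupp.linearCombination A (id : M → M))) _ M
      (LinearMap.ker (Finsupp.linearCombination A (id : M → M))).subtype
      (Finsupp.linearCombination A (id : M → M)) (Submodule.subtype_injective _)
      (LinearMap.exact_subtype_ker_map _) (Finsupp.linearCombination_id_surjective A M)
    have := TT_flat A (IsLocalRing.ResidueField A) (M →₀ A) i
    have h1 : δ i (a • x) = 0 := by rw [map_smul]; exact ih _ a ha _
    obtain ⟨y, hy⟩ := (h i _).1 h1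
    rw [← hy, Subsingleton.elim y 0, map_zero]

theorem betti_eq (A : Type) [CommRing A] [IsLocalRing A] (M : Type)
    [AddCommGroup M] [Module A M] (i : ℕ) (hfin : LL A M i ≠ ⊤) :
    (bettiNumber A M i : ℕ∞) = LL A M i := by
  have hk := TT_killed A i M
  unfold bettiNumber LL at *
  set T := TT A (IsLocalRing.ResidueField A) M i
  have h1 : Module.length A (IsLocalRing.ResidueField A ⊗[A] T) =
      Module.length (IsLocalRing.ResidueField A) (IsLocalRing.ResidueField A ⊗[A] T) :=
    Module.length_eq_of_surjective IsLocalRing.residue_surjective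
  have h0 : (IsLocalRing.maximalIdeal A • ⊤ : Submodule A T) = ⊥ := by
    rw [eq_bot_iff, Submodule.smul_le]
    intro a ha x _
    exact hk a ha x
  have h2 : Module.length A (IsLocalRing.ResidueField A ⊗[A] T) = Module.length A T :=
    (TensorProduct.quotTensorEquivQuotSMul T (IsLocalRing.maximalIdeal A) ≪≫ₗ
      Submodule.quotEquivOfEqBot _ h0).length_eq
  have h3 : IsFiniteLength (IsLocalRing.ResidueField A) (IsLocalRing.ResidueField A ⊗[A] T) := by
    rw [← Module.length_ne_top_iff, ← h1, h2]; exact hfin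
  have := (isFiniteLength_iff_isNoetherian_isArtinian.1 h3).1
  rw [← h2, h1, Module.length_eq_finrank]

theorem LL_zero (A : Type) [CommRing A] [IsLocalRing A] (M : Type)
    [AddCommGroup M] [Module A M] [Module.Finite A M] :
    LL A M 0 = Module.finrank (IsLocalRing.ResidueField A) (IsLocalRing.ResidueField A ⊗[A] M) := by
  unfold LL
  rw [(TTzero A (IsLocalRing.ResidueField A) M ≪≫ₗ TensorProduct.comm A _ _).length_eq,
    Module.length_eq_of_surjective (R := IsLocalRing.ResidueField A)
    IsLocalRing.residue_surjective, Module.length_eq_finrank]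

theorem cover (A : Type) [CommRing A] [IsLocalRing A] (M : Type)
    [AddCommGroup M] [Module A M] [Module.Finite A M] :
    ∃ (b : ℕ) (v : (Fin b → A) →ₗ[A] M), Function.Surjective v ∧ LL A M 0 = b ∧
      LL A (Fin b → A) 0 = b := by
  refine ⟨Module.finrank (IsLocalRing.ResidueField A) (IsLocalRing.ResidueField A ⊗[A] M), ?_⟩
  set k := IsLocalRing.ResidueField A
  let B := Module.finBasis k (k ⊗[A] M)
  have hs := TensorProduct.mk_surjective A M k IsLocalRing.residue_surjective
  choose w hw using fun i => hs (B i)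
  have := IsLocalRing.span_eq_top_of_tmul_eq_basis w B hw
  refine ⟨Fintype.linearCombination A w, ?_, LL_zero A M, ?_⟩
  · rw [← LinearMap.range_eq_top, Fintype.range_linearCombination, this]
  · rw [LL_zero, Module.finrank_baseChange]
    simp

theorem LL_shift_le (A : Type) [CommRing A] [IsLocalRing A] (N F M : Type)
    [AddCommGroup N] [Module A N] [AddCommGroup F] [Module A F]
    [AddCommGroup M] [Module A M] (u : N →ₗ[A] F) (v : F →ₗ[A] M) (hu : Function.Injective u)
    (huv : Function.Exact u v) (hv : Function.Surjective v) :
    (∀ i, LL A F i ≤ LL A N i + LL A M i) ∧ (∀ i, LL A M (i+1) ≤ LL A F (i+1) + LL A N i) ∧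
    (∀ i, LL A N i ≤ LL A M (i+1) + LL A F i) ∧ LL A M 0 ≤ LL A F 0 ∧
    LL A N 0 + LL A M 0 ≤ LL A M 1 + LL A F 0 := by
  obtain ⟨a, b, δ, h1, h2, h3, h4⟩ := TT_les A (IsLocalRing.ResidueField A) N F M u v hu huv hv
  exact ⟨fun i => len3 _ _ (h1 i), fun i => len3 _ _ (h2 i), fun i => len3 _ _ (h3 i),
    Module.length_le_of_surjective _ h4, len4 _ _ _ (h3 0) (h1 0) h4⟩

theorem LL_flat (A : Type) [CommRing A] [IsLocalRing A] (M : Type)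
    [AddCommGroup M] [Module A M] [Module.Flat A M] (i : ℕ) : LL A M (i+1) = 0 := by
  have := TT_flat A (IsLocalRing.ResidueField A) M i
  exact Module.length_eq_zero

theorem LL_ne_top (A : Type) [CommRing A] [IsLocalRing A] [IsNoetherianRing A] (i : ℕ) :
    ∀ (M : Type) [AddCommGroup M] [Module A M] [Module.Finite A M], LL A M i ≠ ⊤ := by
  induction i with
  | zero => intro M _ _ _; rw [LL_zero]; simp
  | succ i ih =>
    intro M _ _ _
    obtain ⟨b, v, hv, -, -⟩ := cover A M
    obtain ⟨-, h, -⟩ := LL_shift_le A _ _ M (LinearMap.ker v).subtype v (Submodule.subtype_injective _)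
      (LinearMap.exact_subtype_ker_map _) hv
    have := h i
    rw [LL_flat A (Fin b → A), zero_add] at this
    exact ne_top_of_le_ne_top (ih _) this

theorem LL_cyclic (Q : Type) [CommRing Q] [IsLocalRing Q] (i : ℕ) : ∀ (f g : Q)
    (_ : ∀ x : Q, x * f = 0 ↔ x ∈ Ideal.span {g})
    (_ : ∀ x : Q, x * g = 0 ↔ x ∈ Ideal.span {f}),
    LL Q (Q ⧸ Ideal.span {f}) i ≤ 1 := by
  have main : ∀ (f g : Q) (_ : ∀ x : Q, x * f = 0 ↔ x ∈ Ideal.span {g}),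
      LL Q (Q ⧸ Ideal.span {f}) 0 ≤ LL Q Q 0 ∧
      ∀ i, LL Q (Q ⧸ Ideal.span {f}) (i+1) ≤ LL Q (Q ⧸ Ideal.span {g}) i := by
    intro f g h
    have hle : Ideal.span {g} ≤ LinearMap.ker (LinearMap.mulRight Q f) := fun x hx => by
      simpa using (h x).2 hx
    obtain ⟨-, h1, -, h2, -⟩ := LL_shift_le Q (Q ⧸ Ideal.span {g}) Q (Q ⧸ Ideal.span {f})
      (Submodule.liftQ (Ideal.span {g}) (LinearMap.mulRight Q f) hle)
      (Submodule.mkQ (Ideal.span {f}))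
      (by
        rw [← LinearMap.ker_eq_bot]
        apply Submodule.ker_liftQ_eq_bot
        intro x hx
        exact (h x).1 (by simpa using hx))
      (by
        rw [LinearMap.exact_iff, Submodule.ker_mkQ, Submodule.range_liftQ]
        ext x
        simp [Ideal.mem_span_singleton', eq_comm])
      (Submodule.mkQ_surjective _)
    refine ⟨h2, fun i => ?_⟩
    have := h1 i
    rwa [LL_flat Q Q, zero_add] at this
  induction i with
  | zero =>
    intro f g h _
    refine (main f g h).1.trans ?_
    unfold LL
    rw [(TTzero Q (IsLocalRing.ResidueField Q) Q ≪≫ₗ TensorProduct.lid Q _).length_eq, residue_len]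
  | succ i ih =>
    intro f g h h'
    exact ((main f g h).2 i).trans (ih g f h' h)

theorem LL_pow (Q R : Type) [CommRing Q] [IsLocalRing Q] [AddCommGroup R] [Module Q R] (i : ℕ)
    (h : LL Q R i ≤ 1) (b : ℕ) : LL Q (Fin b → R) i ≤ b := by
  induction b with
  | zero =>
    obtain ⟨h1, -⟩ := LL_shift_le Q (Fin 0 → Q) (Fin 0 → R) (Fin 0 → R) 0 LinearMap.id
      (Function.injective_of_subsingleton _) (by intro x; simp [Subsingleton.elim x 0])
      Function.surjective_id
    have : LL Q (Fin 0 → R) i = 0 := by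
      cases i with
      | zero => rw [LL_zero]; simp [Module.finrank_zero_of_subsingleton]
      | succ i =>
        exact LL_flat Q _ i
    simp [this]
  | succ b ih =>
    obtain ⟨h1, -⟩ := LL_shift_le Q R (Fin (b+1) → R) (Fin b → R)
      (LinearMap.single Q (fun _ => R) 0) (LinearMap.funLeft Q R Fin.succ)
      (Pi.single_injective (M := fun _ : Fin (b + 1) => R) 0)
      (by
        intro x
        constructor
        · intro hx
          refine ⟨x 0, ?_⟩
          ext j
          refine Fin.cases (by simp) (fun j => ?_) j
          have := congrFun hx j
          simp [LinearMap.funLeft] at this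
          simp [this]
        · rintro ⟨y, rfl⟩
          ext j
          simp [LinearMap.funLeft])
      (LinearMap.funLeft_surjective_of_injective Q R _ (Fin.succ_injective _))
    refine (h1 i).trans ?_
    rw [add_comm]
    push_cast
    exact add_le_add ih h

theorem LL_main (Q : Type) [CommRing Q] [IsNoetherianRing Q] [IsLocalRing Q]
    (f g : Q)
    (hannf : ∀ x : Q, x * f = 0 ↔ x ∈ Ideal.span {g})
    (hanng : ∀ x : Q, x * g = 0 ↔ x ∈ Ideal.span {f})
    [IsLocalRing (Q ⧸ Ideal.span {f})] (i : ℕ) :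
    ∀ (M : Type) [AddCommGroup M] [Module Q M] [Module (Q ⧸ Ideal.span {f}) M]
    [IsScalarTower Q (Q ⧸ Ideal.span {f}) M]
    [Module.Finite (Q ⧸ Ideal.span {f}) M],
    LL Q M i ≤ ∑ p ∈ Finset.range (i+1), LL (Q ⧸ Ideal.span {f}) M p := by
  set R := Q ⧸ Ideal.span {f} with hR
  have hcyc : ∀ i, LL Q R i ≤ 1 := fun i => LL_cyclic Q i f g hannf hanng
  induction i with
  | zero =>
    intro M _ _ _ _ _
    obtain ⟨b, v, hv, hb, -⟩ := cover R M
    obtain ⟨-, -, -, h, -⟩ := LL_shift_le Q _ _ M ((LinearMap.ker v).subtype.restrictScalars Q)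
      (v.restrictScalars Q) (Submodule.subtype_injective _)
      (LinearMap.exact_subtype_ker_map _) hv
    rw [Finset.sum_range_one, hb]
    exact h.trans (LL_pow Q R 0 (hcyc 0) b)
  | succ i ih =>
    intro M _ _ _ _ _
    obtain ⟨b, v, hv, hb, hb'⟩ := cover R M
    obtain ⟨-, h, -⟩ := LL_shift_le Q _ _ M ((LinearMap.ker v).subtype.restrictScalars Q)
      (v.restrictScalars Q) (Submodule.subtype_injective _)
      (LinearMap.exact_subtype_ker_map _) hv
    obtain ⟨-, -, h1, -, h2⟩ := LL_shift_le R _ _ M (LinearMap.ker v).subtype v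
      (Submodule.subtype_injective _)
      (LinearMap.exact_subtype_ker_map _) hv
    have h3 : ∀ p, LL R (LinearMap.ker v) p ≤ LL R M (p+1) := by
      intro p
      cases p with
      | zero =>
        rw [hb, hb'] at h2
        exact (ENat.add_le_add_iff_right (ENat.natCast_ne_top b)).1 h2
      | succ p => simpa [LL_flat] using h1 (p+1)
    rw [Finset.sum_range_succ', hb, add_comm _ (b : ℕ∞)]
    refine (h i).trans (add_le_add (LL_pow Q R _ (hcyc _) b) ?_)
    exact (ih _).trans (Finset.sum_le_sum fun p _ => h3 p)

/-- **Complexity bound.** Let `f, g` be an exact pair of zerodivisors in the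
maximal ideal of a Noetherian local ring `Q` and set `R = Q/(f)`. If the Betti
numbers of a finitely generated `R`-module `M` over `R` grow polynomially of
degree `< d` (i.e. `β_i^R(M) ≤ c·(i+1)^{d−1}`), then the Betti numbers of `M`
over `Q` grow polynomially of degree `< d + 1`; that is, `cx_Q(M) ≤ cx_R(M) + 1`. -/
theorem complexity_le_of_exact_zerodivisor
    (Q : Type) [CommRing Q] [IsNoetherianRing Q] [IsLocalRing Q]
    (f g : Q) (hf0 : f ≠ 0) (hg0 : g ≠ 0)
    (hfm : f ∈ IsLocalRing.maximalIdeal Q) (hgm : g ∈ IsLocalRing.maximalIdeal Q)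
    (hannf : ∀ x : Q, x * f = 0 ↔ x ∈ Ideal.span {g})
    (hanng : ∀ x : Q, x * g = 0 ↔ x ∈ Ideal.span {f})
    [IsLocalRing (Q ⧸ Ideal.span {f})]
    (M : Type) [AddCommGroup M] [Module Q M] [Module (Q ⧸ Ideal.span {f}) M]
    [IsScalarTower Q (Q ⧸ Ideal.span {f}) M]
    [Module.Finite (Q ⧸ Ideal.span {f}) M]
    (d : ℕ) (hd : 1 ≤ d) (c : ℝ)
    (hc : ∀ i : ℕ, (bettiNumber (Q ⧸ Ideal.span {f}) M i : ℝ) ≤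
      c * ((i : ℝ) + 1) ^ (d - 1)) :
    ∃ c' : ℝ, ∀ i : ℕ, (bettiNumber Q M i : ℝ) ≤ c' * ((i : ℝ) + 1) ^ d := by
  have hfin : ∀ p, (bettiNumber (Q ⧸ Ideal.span {f}) M p : ℕ∞) = LL (Q ⧸ Ideal.span {f}) M p :=
    fun p => betti_eq _ M p (LL_ne_top _ p M)
  have key : ∀ i, bettiNumber Q M i ≤
      ∑ p ∈ Finset.range (i + 1), bettiNumber (Q ⧸ Ideal.span {f}) M p := by
    intro i
    have h := (betti_le Q M i).trans (LL_main Q f g hannf hanng i M)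
    simp only [← hfin] at h
    exact_mod_cast h
  have hc0 : 0 ≤ c := by
    have := hc 0
    simp only [Nat.cast_zero, zero_add, one_pow, mul_one] at this
    exact (Nat.cast_nonneg _).trans this
  refine ⟨c, fun i => ?_⟩
  calc (bettiNumber Q M i : ℝ) ≤
      ∑ p ∈ Finset.range (i + 1), (bettiNumber (Q ⧸ Ideal.span {f}) M p : ℝ) := by
        exact_mod_cast key i
    _ ≤ ∑ _p ∈ Finset.range (i + 1), c * ((i : ℝ) + 1) ^ (d - 1) := by
        refine Finset.sum_le_sum fun p hp => (hc p).trans ?_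
        have : (p : ℝ) ≤ i := by
          exact_mod_cast Nat.lt_succ_iff.1 (Finset.mem_range.1 hp)
        gcongr
    _ = c * ((i : ℝ) + 1) ^ d := by
        obtain ⟨e, rfl⟩ : ∃ e, d = e + 1 := ⟨d - 1, by omega⟩
        simp only [Finset.sum_const, Finset.card_range, nsmul_eq_mul, Nat.add_sub_cancel]
        push_cast
        ring
end

section
/- Let (Q, m, k) be a commutative Noetherian local ring and let f, g be an exact pair of zerodivisors in m, i.e. f and g are nonzero elements of m with ann_Q(f) = (g) and ann_Q(g) = (f). Set R = Q/(f). Then depth Q = depth R, where the depth of a Noetherian local ring (A, n, k) is the least integer i such that Ext_A^i(k, A) ≠ 0. (This is the equality depth Q − depth R = grade_Q R for a quasi-complete intersection homomorphism, in the case where the kernel is generated by a single exact zerodivisor, so that grade_Q R = 0.) -/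
open CategoryTheory

/-- The depth of a Noetherian local ring `A`: the least `i` such that
`Ext_A^i(k, A) ≠ 0`, where `k` is the residue field. -/
noncomputable def ringDepth (A : Type) [CommRing A] [IsLocalRing A] : ℕ :=
  sInf {i : ℕ |
    Nontrivial (((Ext A (ModuleCat A) i).obj
      (Opposite.op (ModuleCat.of A (IsLocalRing.ResidueField A)))).obj
      (ModuleCat.of A A))}

lemma subsing_ext_iff (A : Type) [CommRing A] (X Y : ModuleCat.{0} A) (n : ℕ) :
    Subsingleton (((Ext A (ModuleCat A) n).obj (Opposite.op X)).obj Y) ↔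
      Subsingleton (Abelian.Ext X Y n) := by
  let P := projectiveResolution X
  have e := P.isoExt (R := A) n Y
  rw [← ModuleCat.isZero_iff_subsingleton, e.isZero_iff,
    ← HomologicalComplex.exactAt_iff_isZero_homology]
  cases n with
  | zero =>
    rw [HomologicalComplex.exactAt_iff' _ 0 0 1 (by simp) (by simp),
      ShortComplex.moduleCat_exact_iff, Abelian.Ext.addEquiv₀.toEquiv.subsingleton_congr]
    constructor
    · intro h
      refine subsingleton_of_forall_eq 0 fun u => ?_
      let u' : ((ChainComplex.single₀ (ModuleCat A)).obj X).X 0 ⟶ Y := u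
      have hz : P.complex.d 1 0 ≫ (P.π.f 0 ≫ u') = 0 := by
        rw [← Category.assoc, P.complex_d_comp_π_f_zero, Limits.zero_comp]
      have := h (P.π.f 0 ≫ u') hz
      obtain ⟨v, hv⟩ := this
      let v' : P.complex.X 0 ⟶ Y := v
      have h0 : P.complex.d 0 0 ≫ v' = P.π.f 0 ≫ u' := hv
      rw [P.complex.shape _ _ (by simp)] at h0
      have : u' = 0 := by
        rw [← cancel_epi (P.π.f 0), ← h0, Limits.zero_comp, Limits.comp_zero]
      exact this
    · intro h u hu
      have hu : P.complex.d 1 0 ≫ u = 0 := hu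
      obtain ⟨l, hl⟩ := P.exact₀.desc' u hu
      refine ⟨0, ?_⟩
      have : l = 0 := h.elim _ _
      rw [map_zero, ← hl, this]; exact (Limits.comp_zero).symm
  | succ n =>
    rw [HomologicalComplex.exactAt_iff' _ n (n+1) (n+2) (by simp) (by simp),
      ShortComplex.moduleCat_exact_iff]
    constructor
    · intro h
      refine subsingleton_of_forall_eq 0 fun u => ?_
      obtain ⟨f, hf, rfl⟩ := P.extMk_surjective u (n+2) rfl
      exact (P.extMk_eq_zero_iff f (n+2) rfl hf n rfl).2 (h f hf)
    · intro h f hf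
      exact (P.extMk_eq_zero_iff f (n+2) rfl hf n rfl).1 (h.elim _ _)

section
variable {Q : Type} [CommRing Q]
open Abelian

lemma ext_all_of_shortExact {k M R S : ModuleCat.{0} Q} (a : S ⟶ M) (b : M ⟶ R)
    (w : a ≫ b = 0) (hs : (ShortComplex.mk a b w).ShortExact)
    (c : R ⟶ M) (d : M ⟶ S) (w' : c ≫ d = 0) (hs' : (ShortComplex.mk c d w').ShortExact)
    (hda : ∀ i (x : Ext k M i), x.comp (Ext.mk₀ (d ≫ a)) (add_zero i) = 0) (n : ℕ) :
    (∀ i < n, Subsingleton (Ext k M i)) ↔ (∀ i < n, Subsingleton (Ext k R i)) := by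
  constructor
  · intro h
    have key : ∀ i < n, Subsingleton (Ext k R i) ∧ Subsingleton (Ext k S i) := by
      intro i
      induction i with
      | zero =>
        intro hi
        have := h 0 hi
        have := hs.mono_f
        have := hs'.mono_f
        exact ⟨(Ext.postcomp_mk₀_injective_of_mono k c).subsingleton,
          (Ext.postcomp_mk₀_injective_of_mono k a).subsingleton⟩
      | succ i ih =>
        intro hi
        obtain ⟨h1, h2⟩ := ih (by omega)
        have := h _ hi
        constructor
        · refine subsingleton_of_forall_eq 0 fun x => ?_
          obtain ⟨y, rfl⟩ := Ext.covariant_sequence_exact₁ k hs' x (this.elim _ _) rfl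
          rw [h2.elim y 0, Ext.zero_comp]
        · refine subsingleton_of_forall_eq 0 fun x => ?_
          obtain ⟨y, rfl⟩ := Ext.covariant_sequence_exact₁ k hs x (this.elim _ _) rfl
          rw [h1.elim y 0, Ext.zero_comp]
    exact fun i hi => (key i hi).1
  · intro h i hi
    refine subsingleton_of_forall_eq 0 fun x => ?_
    have h1 : x.comp (Ext.mk₀ d) (add_zero i) = 0 := by
      have h0 : (x.comp (Ext.mk₀ d) (add_zero i)).comp (Ext.mk₀ a) (add_zero i) = 0 := by
        rw [Ext.comp_assoc_of_third_deg_zero, Ext.mk₀_comp_mk₀]; exact hda i x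
      cases i with
      | zero =>
        have := hs.mono_f
        apply Ext.postcomp_mk₀_injective_of_mono k a
        simpa using h0
      | succ i =>
        obtain ⟨y, hy⟩ := Ext.covariant_sequence_exact₁ k hs _ h0 rfl
        rw [← hy, (h i (by omega)).elim y 0, Ext.zero_comp]
    obtain ⟨y, rfl⟩ := Ext.covariant_sequence_exact₂ k hs' x h1
    rw [(h i hi).elim y 0, Ext.zero_comp]
end

open Abelian RingTheory.Sequence in
lemma ext_iff_regular (A : Type) [CommRing A] [IsLocalRing A] [IsNoetherianRing A]
    (M : Type) [AddCommGroup M] [Module A M] [Module.Finite A M] [Nontrivial M] (n : ℕ) :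
    (∀ i < n, Subsingleton (Ext (ModuleCat.of A (IsLocalRing.ResidueField A))
      (ModuleCat.of A M) i)) ↔ ∃ rs : List A, rs.length = n ∧
      (∀ r ∈ rs, r ∈ IsLocalRing.maximalIdeal A) ∧ IsWeaklyRegular M rs := by
  have hlt : IsLocalRing.maximalIdeal A • (⊤ : Submodule A M) < ⊤ :=
    (Submodule.top_ne_ideal_smul_of_le_jacobson_annihilator
      (IsLocalRing.maximalIdeal_le_jacobson _)).symm.lt_top
  have hsupp : Module.support A (IsLocalRing.ResidueField A) =
      PrimeSpectrum.zeroLocus (IsLocalRing.maximalIdeal A) := by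
    have : Module.support A (A ⧸ IsLocalRing.maximalIdeal A) =
      PrimeSpectrum.zeroLocus (IsLocalRing.maximalIdeal A) := by
      rw [Module.support_eq_zeroLocus, Ideal.annihilator_quotient]
    exact this
  have : Module.Finite A (IsLocalRing.ResidueField A) :=
    inferInstanceAs (Module.Finite A (A ⧸ IsLocalRing.maximalIdeal A))
  constructor
  · intro h
    obtain ⟨rs, h1, h2, h3⟩ := ModuleCat.exists_isRegular_of_exists_subsingleton_ext
      (IsLocalRing.maximalIdeal A) n (ModuleCat.of A M) hlt
      (ModuleCat.of A (IsLocalRing.ResidueField A)) hsupp h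
    exact ⟨rs, h1, h2, h3.toIsWeaklyRegular⟩
  · rintro ⟨rs, rfl, h2, h3⟩
    exact ModuleCat.subsingleton_ext_of_exists_isRegular (IsLocalRing.maximalIdeal A)
      (ModuleCat.of A (IsLocalRing.ResidueField A)) hsupp.subset (ModuleCat.of A M) hlt rs h2
      (IsLocalRing.isRegular_iff_isWeaklyRegular_of_subset_maximalIdeal h2 |>.2 h3)

open RingTheory.Sequence in
lemma regular_quot (Q : Type) [CommRing Q] [IsLocalRing Q] (I : Ideal Q)
    [IsLocalRing (Q ⧸ I)] (n : ℕ) :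
    (∃ rs : List Q, rs.length = n ∧
      (∀ r ∈ rs, r ∈ IsLocalRing.maximalIdeal Q) ∧ IsWeaklyRegular (Q ⧸ I) rs) ↔
    (∃ rs : List (Q ⧸ I), rs.length = n ∧
      (∀ r ∈ rs, r ∈ IsLocalRing.maximalIdeal (Q ⧸ I)) ∧ IsWeaklyRegular (Q ⧸ I) rs) := by
  have hsurj : Function.Surjective (algebraMap Q (Q ⧸ I)) := Ideal.Quotient.mk_surjective
  have : IsLocalHom (algebraMap Q (Q ⧸ I)) := IsLocalHom.of_surjective _ hsurj
  have hmem (r : Q) : algebraMap Q (Q ⧸ I) r ∈ IsLocalRing.maximalIdeal (Q ⧸ I) ↔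
      r ∈ IsLocalRing.maximalIdeal Q := by
    simp [IsLocalRing.mem_maximalIdeal]
  constructor
  · rintro ⟨rs, h1, h2, h3⟩
    refine ⟨rs.map (algebraMap Q (Q ⧸ I)), by simpa using h1, ?_,
      (isWeaklyRegular_map_algebraMap_iff _ _ rs).2 h3⟩
    intro r hr
    obtain ⟨s, hs, rfl⟩ := List.mem_map.1 hr
    exact (hmem s).2 (h2 s hs)
  · rintro ⟨rs, h1, h2, h3⟩
    obtain ⟨ss, rfl⟩ := List.map_surjective_iff.2 hsurj rs
    refine ⟨ss, by simpa using h1, ?_, (isWeaklyRegular_map_algebraMap_iff _ _ ss).1 h3⟩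
    intro r hr
    exact (hmem r).1 (h2 _ (List.mem_map_of_mem hr))

lemma sInf_eq_of_forall_lt {p q : ℕ → Prop} (h : ∀ n, (∀ i < n, p i) ↔ (∀ i < n, q i)) :
    sInf {i | ¬ p i} = sInf {i | ¬ q i} := by
  have key : ∀ {p q : ℕ → Prop}, (∀ n, (∀ i < n, p i) ↔ (∀ i < n, q i)) →
      {i | ¬ q i}.Nonempty → sInf {i | ¬ p i} ≤ sInf {i | ¬ q i} := by
    intro p q h hq
    by_contra! hlt
    exact Nat.sInf_mem hq ((h (sInf {i | ¬ p i})).1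
      (fun i hi => not_not.1 (Nat.notMem_of_lt_sInf hi)) _ hlt)
  by_cases hq : ∀ i, q i
  · have hp : ∀ i, p i := fun i => (h (i + 1)).2 (fun j _ => hq j) i (by omega)
    simp [hp, hq]
  · have hp : ¬ ∀ i, p i := fun hp => hq fun i => (h (i + 1)).1 (fun j _ => hp j) i (by omega)
    push Not at hp hq
    exact le_antisymm (key h hq) (key (fun n => (h n).symm) hp)

lemma ringDepth_eq_of (A B : Type) [CommRing A] [IsLocalRing A] [CommRing B] [IsLocalRing B]
    (h : ∀ n, (∀ i < n, Subsingleton (Abelian.Ext (ModuleCat.of A (IsLocalRing.ResidueField A))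
      (ModuleCat.of A A) i)) ↔ (∀ i < n, Subsingleton (Abelian.Ext
      (ModuleCat.of B (IsLocalRing.ResidueField B)) (ModuleCat.of B B) i))) :
    ringDepth A = ringDepth B := by
  simp only [ringDepth, ← not_subsingleton_iff_nontrivial, subsing_ext_iff]
  exact sInf_eq_of_forall_lt h

lemma quot_shortExact {Q : Type} [CommRing Q] (f g : Q)
    (hannf : ∀ x : Q, x * f = 0 ↔ x ∈ Ideal.span {g}) :
    ∃ (a : ModuleCat.of Q (Q ⧸ Ideal.span {g}) ⟶ ModuleCat.of Q Q)
      (w : a ≫ ModuleCat.ofHom (Ideal.span {f}).mkQ = 0),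
      (ShortComplex.mk a (ModuleCat.ofHom (Ideal.span {f}).mkQ) w).ShortExact ∧
      ModuleCat.ofHom (Ideal.span {g}).mkQ ≫ a = f • 𝟙 (ModuleCat.of Q Q) := by
  let a : (Q ⧸ Ideal.span {g}) →ₗ[Q] Q := (Ideal.span {g}).liftQ (LinearMap.mulRight Q f)
    (fun x hx => by simpa using (hannf x).2 hx)
  have ha (x : Q) : a (Submodule.Quotient.mk x) = x * f := rfl
  refine ⟨ModuleCat.ofHom a, ?_, ?_, ?_⟩
  · refine ModuleCat.hom_ext (LinearMap.ext fun x => ?_)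
    obtain ⟨x, rfl⟩ := Submodule.Quotient.mk_surjective _ x
    change Submodule.Quotient.mk (a (Submodule.Quotient.mk x)) = 0
    rw [ha, Submodule.Quotient.mk_eq_zero]
    exact Ideal.mul_mem_left _ _ (Ideal.mem_span_singleton_self f)
  · refine @ShortComplex.ShortExact.mk _ _ _ _ ?_ ?_ ?_
    · rw [ShortComplex.moduleCat_exact_iff]
      intro x hx
      have hx : Submodule.Quotient.mk (p := Ideal.span {f}) x = 0 := hx
      rw [Submodule.Quotient.mk_eq_zero, Ideal.mem_span_singleton'] at hx
      obtain ⟨y, rfl⟩ := hx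
      exact ⟨Submodule.Quotient.mk y, rfl⟩
    · rw [ModuleCat.mono_iff_injective]
      change Function.Injective a
      rw [injective_iff_map_eq_zero]
      intro x hx
      obtain ⟨x, rfl⟩ := Submodule.Quotient.mk_surjective _ x
      rw [Submodule.Quotient.mk_eq_zero, ← hannf, ← ha, hx]
    · rw [ModuleCat.epi_iff_surjective]
      exact Submodule.mkQ_surjective _
  · ext
    change (1:Q) * f = f * 1
    ring

/-- **Depth equality.** Let `f, g` be an exact pair of zerodivisors in the
maximal ideal of a Noetherian local ring `Q` and set `R = Q/(f)`. Then
`depth Q = depth R` (the case `grade_Q R = 0` of the equality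
`depth Q − depth R = grade_Q R` for q.c.i. homomorphisms). -/
theorem depth_eq_of_exact_zerodivisor
    (Q : Type) [CommRing Q] [IsNoetherianRing Q] [IsLocalRing Q]
    (f g : Q) (hf0 : f ≠ 0) (hg0 : g ≠ 0)
    (hfm : f ∈ IsLocalRing.maximalIdeal Q) (hgm : g ∈ IsLocalRing.maximalIdeal Q)
    (hannf : ∀ x : Q, x * f = 0 ↔ x ∈ Ideal.span {g})
    (hanng : ∀ x : Q, x * g = 0 ↔ x ∈ Ideal.span {f})
    [IsLocalRing (Q ⧸ Ideal.span {f})] :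
    ringDepth Q = ringDepth (Q ⧸ Ideal.span {f}) := by
  apply ringDepth_eq_of
  intro n
  rw [ext_iff_regular (Q ⧸ Ideal.span {f}), ← regular_quot, ← ext_iff_regular]
  obtain ⟨a, w, hs, hda⟩ := quot_shortExact f g hannf
  obtain ⟨c, w', hs', -⟩ := quot_shortExact g f hanng
  refine ext_all_of_shortExact a _ w hs c _ w' hs' ?_ n
  intro i x
  rw [hda]
  have hann : f ∈ Module.annihilator Q (ModuleCat.of Q (IsLocalRing.ResidueField Q)) := by
    have : f ∈ Module.annihilator Q (Q ⧸ IsLocalRing.maximalIdeal Q) := by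
      rwa [Ideal.annihilator_quotient]
    exact this
  have := Abelian.Ext.postcomp_smul_id_eq_zero_of_mem_annihilator
    (M := ModuleCat.of Q Q) hann i
  exact DFunLike.congr_fun (congrArg AddCommGrpCat.Hom.hom this) x
end

section
/- Let (Q, m, k) be a commutative Noetherian local ring, let f ∈ m ∖ m² be a Q-regular element (a nonzerodivisor), and set R = Q/(f). Then for every finitely generated R-module M and every integer i ≥ 0 one has β_i^Q(M) = β_i^R(M) + β_{i−1}^R(M) (with the convention β_{−1}^R(M) = 0). (Equivalently, P_M^Q(t) = (1+t)·P_M^R(t); this is the case n = 1 of Nagata's equality, recovered from the dg Koszul-complex theorem.) -/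
open CategoryTheory TensorProduct

namespace Nagata
open Limits
universe u v
section Cat
variable {C : Type u} [Category.{v} C] [Abelian C]

lemma resolution_data (X : C) (P : ProjectiveResolution X) :
    ∃ (p : P.complex.X 0 ⟶ X) (w : P.complex.d 1 0 ≫ p = 0),
      Epi p ∧ (ShortComplex.mk _ _ w).Exact ∧ Nonempty (IsColimit (CokernelCofork.ofπ p w)) :=
  ⟨P.π.f 0, P.complex_d_comp_π_f_zero, inferInstanceAs (Epi (P.π.f 0)), P.exact₀,
    ⟨P.isColimitCokernelCofork⟩⟩

lemma shift_exists (S : ShortComplex C) (hS : S.ShortExact) [Projective S.X₂]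
    (P : ProjectiveResolution S.X₁) (p : P.complex.X 0 ⟶ S.X₁) (w0 : P.complex.d 1 0 ≫ p = 0)
    [Epi p] (hex : (ShortComplex.mk _ _ w0).Exact) (w : P.complex.d 1 0 ≫ (p ≫ S.f) = 0) :
    ∃ R : ProjectiveResolution S.X₃, R.complex = P.complex.augment (p ≫ S.f) w := by
  have := hS.mono_f
  have := hS.epi_g
  let K := P.complex.augment (p ≫ S.f) w
  have hex0 : (ShortComplex.mk (p ≫ S.f) S.g (by simp)).Exact := by
    let α : ShortComplex.mk (p ≫ S.f) S.g (by simp) ⟶ S :=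
      { τ₁ := p
        τ₂ := 𝟙 _
        τ₃ := 𝟙 _ }
    have : Epi α.τ₁ := inferInstanceAs (Epi p)
    have : IsIso α.τ₂ := inferInstanceAs (IsIso (𝟙 _))
    have : Mono α.τ₃ := inferInstanceAs (Mono (𝟙 _))
    rw [ShortComplex.exact_iff_of_epi_of_isIso_of_mono α]
    exact hS.exact
  have hex1 : (ShortComplex.mk (P.complex.d 1 0) (p ≫ S.f) w).Exact := by
    let α : ShortComplex.mk (P.complex.d 1 0) p w0 ⟶
        ShortComplex.mk (P.complex.d 1 0) (p ≫ S.f) w :=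
      { τ₁ := 𝟙 _
        τ₂ := 𝟙 _
        τ₃ := S.f }
    have : Epi α.τ₁ := inferInstanceAs (Epi (𝟙 _))
    have : IsIso α.τ₂ := inferInstanceAs (IsIso (𝟙 _))
    have : Mono α.τ₃ := inferInstanceAs (Mono S.f)
    rw [← ShortComplex.exact_iff_of_epi_of_isIso_of_mono α]
    exact hex
  have hproj : ∀ n, Projective (K.X n) := by
    rintro (_ | n)
    · exact inferInstanceAs (Projective S.X₂)
    · exact P.projective n
  have hK1 : ∀ n, K.ExactAt (n + 1) := by
    intro n
    rw [HomologicalComplex.exactAt_iff' _ (n + 1 + 1) (n + 1) n (by simp) (by simp)]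
    match n with
    | 0 => exact hex1
    | n + 1 => exact P.exact_succ n
  let π : K ⟶ (ChainComplex.single₀ C).obj S.X₃ :=
    (ChainComplex.toSingle₀Equiv K S.X₃).symm ⟨S.g, by
      change (p ≫ S.f) ≫ S.g = 0
      simp⟩
  have hπ : π.f 0 = S.g := ChainComplex.toSingle₀Equiv_symm_apply_f_zero _ _
  refine ⟨{ complex := K, projective := hproj, π := π, quasiIso := ⟨fun n => ?_⟩ }, rfl⟩
  cases n with
  | zero =>
    rw [ChainComplex.quasiIsoAt₀_iff, ShortComplex.quasiIso_iff_of_zeros']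
    · refine (ShortComplex.exact_and_epi_g_iff_of_iso ?_).2 ⟨hex0, this⟩
      exact ShortComplex.isoMk (Iso.refl _) (Iso.refl _) (Iso.refl _) 
        ((Category.id_comp _).trans (Category.comp_id _).symm)
        ((Category.id_comp _).trans (Eq.trans hπ.symm (Category.comp_id _).symm))
    all_goals rfl
  | succ n =>
    rw [quasiIsoAt_iff_exactAt']
    · apply hK1
    · apply ChainComplex.exactAt_succ_single_obj

variable {D : Type u} [Category.{v} D] [Abelian D] [HasProjectiveResolutions C]
  (G : C ⥤ D) [G.Additive] 

lemma shift_succ (S : ShortComplex C) (hS : S.ShortExact) [Projective S.X₂] (n : ℕ) :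
    Nonempty ((G.leftDerived (n + 2)).obj S.X₃ ≅ (G.leftDerived (n + 1)).obj S.X₁) := by
  let P := projectiveResolution S.X₁
  obtain ⟨p, w0, _, hex, -⟩ := resolution_data _ P
  obtain ⟨R, hR⟩ := shift_exists S hS P p w0 hex (by rw [reassoc_of% w0, zero_comp])
  refine ⟨R.isoLeftDerivedObj G (n + 2) ≪≫ ?_ ≪≫ (P.isoLeftDerivedObj G (n + 1)).symm⟩
  refine (HomologicalComplex.homologyFunctor D _ _).mapIso
    ((G.mapHomologicalComplex _).mapIso (eqToIso hR)) ≪≫ ?_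
  exact ShortComplex.homologyMapIso
    (HomologicalComplex.isoSc' _ (n + 3) (n + 2) (n + 1)
        (ChainComplex.prev ℕ (n + 2)) (ChainComplex.next_nat_succ (n + 1)) ≪≫
      ShortComplex.isoMk
        (S₂ := HomologicalComplex.sc' ((G.mapHomologicalComplex _).obj P.complex) (n + 2) (n + 1) n)
        (Iso.refl _) (Iso.refl _) (Iso.refl _)
        ((Category.id_comp _).trans (Category.comp_id _).symm)
        ((Category.id_comp _).trans (Category.comp_id _).symm) ≪≫
      (HomologicalComplex.isoSc' _ (n + 2) (n + 1) n
        (ChainComplex.prev ℕ (n + 1)) (ChainComplex.next_nat_succ n)).symm)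

lemma shift_one [PreservesFiniteColimits G]
    (S : ShortComplex C) (hS : S.ShortExact) [Projective S.X₂] :
    Nonempty ((G.leftDerived 1).obj S.X₃ ≅ kernel (G.map S.f)) := by
  let P := projectiveResolution S.X₁
  obtain ⟨p, w0, _, hex, ⟨hc⟩⟩ := resolution_data _ P
  have w : P.complex.d 1 0 ≫ (p ≫ S.f) = 0 := by rw [reassoc_of% w0, zero_comp]
  obtain ⟨R, hR⟩ := shift_exists S hS P p w0 hex w
  refine ⟨R.isoLeftDerivedObj G 1 ≪≫ (HomologicalComplex.homologyFunctor D _ _).mapIso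
    ((G.mapHomologicalComplex _).mapIso (eqToIso hR)) ≪≫ ?_⟩
  let T : ShortComplex D := ShortComplex.mk (G.map (P.complex.d 1 0)) (G.map (p ≫ S.f))
    (by rw [← G.map_comp, w, G.map_zero])
  have wp : G.map (P.complex.d 1 0) ≫ G.map p = 0 := by
    rw [← G.map_comp, w0, G.map_zero]
  let hp : IsColimit (CokernelCofork.ofπ (f := T.f) (G.map p) wp) :=
    CokernelCofork.mapIsColimit _ hc G
  have hdesc : hp.desc (CokernelCofork.ofπ _ T.zero) = G.map S.f := by
    have := hS.epi_g
    apply Cofork.IsColimit.hom_ext hp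
    rw [Cofork.IsColimit.π_desc]
    simp [T]
  have hι : ∀ (g : G.obj S.X₁ ⟶ G.obj S.X₂) (hg : g = G.map S.f)
      (wι : kernel.ι (G.map S.f) ≫ g = 0),
      Nonempty (IsLimit (KernelFork.ofι (kernel.ι (G.map S.f)) wι)) := by
    rintro g rfl wι
    exact ⟨kernelIsKernel _⟩
  let h : T.RightHomologyData :=
    { Q := G.obj S.X₁
      H := kernel (G.map S.f)
      p := G.map p
      ι := kernel.ι (G.map S.f)
      wp := wp
      hp := hp
      wι := by rw [hdesc]; simp
      hι := (hι _ hdesc _).some }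
  refine ShortComplex.homologyMapIso
    (HomologicalComplex.isoSc' _ 2 1 0
        (ChainComplex.prev ℕ 1) (ChainComplex.next_nat_succ 0) ≪≫
      ShortComplex.isoMk (S₂ := T) (Iso.refl _) (Iso.refl _) (Iso.refl _) 
        ((Category.id_comp _).trans (Category.comp_id _).symm)
        ((Category.id_comp _).trans (Category.comp_id _).symm)) ≪≫
      h.homologyIso

lemma leftDerived_additive (n : ℕ) : (G.leftDerived n).Additive where
  map_add {X Y f g} := by
    let P := projectiveResolution X
    let P' := projectiveResolution Y
    rw [Functor.leftDerived_map_eq G n f (ProjectiveResolution.lift f P P')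
        (ProjectiveResolution.lift_commutes f P P'),
      Functor.leftDerived_map_eq G n g (ProjectiveResolution.lift g P P')
        (ProjectiveResolution.lift_commutes g P P'),
      Functor.leftDerived_map_eq G n (f + g)
        (ProjectiveResolution.lift f P P' + ProjectiveResolution.lift g P P') (by
          rw [Preadditive.add_comp, ProjectiveResolution.lift_commutes,
            ProjectiveResolution.lift_commutes, Functor.map_add, Preadditive.comp_add]),
      Functor.map_add, Preadditive.add_comp, Preadditive.comp_add]

end Cat

section Mod
open MonoidalCategory
variable (A : Type) [CommRing A]

/-- Unbundled Tor. -/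
noncomputable abbrev T (n : ℕ) (M N : Type) [AddCommGroup M] [Module A M] [AddCommGroup N] [Module A N] :
    ModuleCat A :=
  ((Tor (ModuleCat A) n).obj (ModuleCat.of A M)).obj (ModuleCat.of A N)

variable (M N N' K F : Type) [AddCommGroup M] [Module A M] [AddCommGroup N] [Module A N]
  [AddCommGroup N'] [Module A N']
  [AddCommGroup K] [Module A K] [AddCommGroup F] [Module A F]

instance : PreservesFiniteColimits ((tensoringLeft (ModuleCat A)).obj (ModuleCat.of A M)) :=
  inferInstanceAs (PreservesFiniteColimits (tensorLeft (ModuleCat.of A M)))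

lemma T_zero : Nonempty (T A 0 M N ≃ₗ[A] M ⊗[A] N) :=
  ⟨((Functor.leftDerivedZeroIsoSelf
    ((tensoringLeft (ModuleCat A)).obj (ModuleCat.of A M))).app (ModuleCat.of A N)).toLinearEquiv⟩

variable {N N'} in
lemma T_congr (n : ℕ) (e : N ≃ₗ[A] N') : Nonempty (T A n M N ≃ₗ[A] T A n M N') :=
  ⟨(((Tor (ModuleCat A) n).obj (ModuleCat.of A M)).mapIso e.toModuleIso).toLinearEquiv⟩

lemma T_prod (n : ℕ) : Nonempty (T A n M (N × N') ≃ₗ[A] (T A n M N × T A n M N')) := by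
  let H : ModuleCat A ⥤ ModuleCat A := (Tor (ModuleCat A) n).obj (ModuleCat.of A M)
  have : H.Additive := leftDerived_additive _ n
  have := preservesBinaryBiproducts_of_preservesBiproducts H
  let e1 := H.mapIso (ModuleCat.biprodIsoProd (ModuleCat.of A N) (ModuleCat.of A N')).symm
  let e2 := H.mapBiprod (ModuleCat.of A N) (ModuleCat.of A N')
  exact ⟨(e1 ≪≫ e2 ≪≫ ModuleCat.biprodIsoProd _ _).toLinearEquiv⟩

variable {N K F}
variable [Module.Projective A F] (ι : K →ₗ[A] F) (π : F →ₗ[A] N)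

lemma ses
    (hι : Function.Injective ι) (hπ : Function.Surjective π) (hex : Function.Exact ι π) : ∃ w : ModuleCat.ofHom ι ≫ ModuleCat.ofHom π = 0,
    (ShortComplex.mk (ModuleCat.ofHom ι) (ModuleCat.ofHom π) w).ShortExact ∧
    Projective (ModuleCat.of A F) := by
  refine ⟨?_, ?_, ?_⟩
  · ext x
    exact hex.apply_apply_eq_zero x
  · refine { exact := ?_, mono_f := ?_, epi_g := ?_ }
    · rw [ShortComplex.moduleCat_exact_iff]
      intro x hx
      exact (hex x).1 hx
    · exact (ModuleCat.mono_iff_injective _).2 hι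
    · exact (ModuleCat.epi_iff_surjective _).2 hπ
  · exact (IsProjective.iff_projective F).1 inferInstance

lemma T_succ
    (hι : Function.Injective ι) (hπ : Function.Surjective π) (hex : Function.Exact ι π)
    (n : ℕ) : Nonempty (T A (n + 2) M N ≃ₗ[A] T A (n + 1) M K) := by
  obtain ⟨w, hS, hP⟩ := ses A ι π hι hπ hex
  have : Projective (ShortComplex.mk (ModuleCat.ofHom ι) (ModuleCat.ofHom π) w).X₂ := hP
  obtain ⟨e⟩ := shift_succ ((tensoringLeft (ModuleCat A)).obj (ModuleCat.of A M)) _ hS n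
  exact ⟨e.toLinearEquiv⟩

lemma T_one
    (hι : Function.Injective ι) (hπ : Function.Surjective π) (hex : Function.Exact ι π) : Nonempty (T A 1 M N ≃ₗ[A] LinearMap.ker (ι.lTensor M)) := by
  obtain ⟨w, hS, hP⟩ := ses A ι π hι hπ hex
  have : Projective (ShortComplex.mk (ModuleCat.ofHom ι) (ModuleCat.ofHom π) w).X₂ := hP
  obtain ⟨e⟩ := shift_one ((tensoringLeft (ModuleCat A)).obj (ModuleCat.of A M)) _ hS
  exact ⟨(e ≪≫ ModuleCat.kernelIsoKer _).toLinearEquiv⟩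
end Mod

section Sum
open IsLocalRing

/-- Minimal number of generators. -/
noncomputable def dd (A : Type) [CommRing A] [IsLocalRing A] (X : Type) [AddCommGroup X]
    [Module A X] : ℕ := Module.finrank (ResidueField A) (ResidueField A ⊗[A] X)

section
variable {A : Type} [CommRing A] [IsLocalRing A] {X Y : Type} [AddCommGroup X]
    [Module A X] [AddCommGroup Y] [Module A Y]

lemma dd_congr (e : X ≃ₗ[A] Y) : dd A X = dd A Y :=
  LinearEquiv.finrank_eq (e.baseChange A (ResidueField A) X Y)

lemma dd_prod [Module.Finite A X] [Module.Finite A Y] : dd A (X × Y) = dd A X + dd A Y := by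
  unfold dd
  rw [LinearEquiv.finrank_eq (TensorProduct.prodRight A (ResidueField A) (ResidueField A) X Y),
    Module.finrank_prod]
end

lemma T_finite (A : Type) [CommRing A] [IsNoetherianRing A] (M : Type) [AddCommGroup M]
    [Module A M] [Module.Finite A M] (n : ℕ) : ∀ (N : Type) [AddCommGroup N] [Module A N]
    [Module.Finite A N], Module.Finite A (T A n M N) := by
  induction n using Nat.strong_induction_on with
  | _ n ih =>
    intro N _ _ _
    match n with
    | 0 =>
      obtain ⟨e⟩ := T_zero A M N
      exact Module.Finite.equiv e.symm
    | 1 =>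
      obtain ⟨r, π, hπ⟩ := Module.Finite.exists_fin' A N
      obtain ⟨e⟩ := T_one A M (LinearMap.ker π).subtype π (Submodule.injective_subtype _) hπ
        (LinearMap.exact_subtype_ker_map π)
      exact Module.Finite.equiv e.symm
    | n + 2 =>
      obtain ⟨r, π, hπ⟩ := Module.Finite.exists_fin' A N
      obtain ⟨e⟩ := T_succ A M (LinearMap.ker π).subtype π (Submodule.injective_subtype _) hπ
        (LinearMap.exact_subtype_ker_map π) n
      have := ih (n + 1) (by omega) (LinearMap.ker π)
      exact Module.Finite.equiv e.symm

/-- Semilinear equivalence along an algebra map. -/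
def SL (Q R : Type) [CommRing Q] [CommRing R] [Algebra Q R] (X Y : Type)
    [AddCommGroup X] [Module Q X] [AddCommGroup Y] [Module R Y] : Prop :=
  ∃ e : X ≃+ Y, ∀ (q : Q) (x : X), e (q • x) = algebraMap Q R q • e x

section
variable {Q R : Type} [CommRing Q] [CommRing R] [Algebra Q R] {X Y X' Y' : Type}
    [AddCommGroup X] [Module Q X] [AddCommGroup Y] [Module R Y]
    [AddCommGroup X'] [Module Q X'] [AddCommGroup Y'] [Module R Y']

lemma SL.trans (h : SL Q R X Y) (a : X' ≃ₗ[Q] X) (b : Y ≃ₗ[R] Y') : SL Q R X' Y' := by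
  obtain ⟨e, he⟩ := h
  exact ⟨a.toAddEquiv.trans (e.trans b.toAddEquiv), fun q x => by simp [he]⟩

lemma SL.of_linear [Module R X] [IsScalarTower Q R X] (e : X ≃ₗ[R] Y) : SL Q R X Y :=
  ⟨e.toAddEquiv, fun q x => by
    rw [← algebraMap_smul R q x]
    exact e.map_smul _ _⟩

lemma SL_ker (u : X →ₗ[Q] X') (v : Y →ₗ[R] Y') (e : X ≃+ Y)
    (he : ∀ (q : Q) (x : X), e (q • x) = algebraMap Q R q • e x) (e' : X' ≃+ Y')
    (h : ∀ x, e' (u x) = v (e x)) : SL Q R (LinearMap.ker u) (LinearMap.ker v) := by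
  refine ⟨{ toFun := fun x => ⟨e x, ?_⟩
            invFun := fun y => ⟨e.symm y, ?_⟩
            left_inv := fun x => by simp
            right_inv := fun x => by simp
            map_add' := fun x y => by ext; simp }, fun q x => ?_⟩
  · have := x.2
    rw [LinearMap.mem_ker] at this ⊢
    rw [← h, this, map_zero]
  · have := y.2
    rw [LinearMap.mem_ker] at this ⊢
    apply e'.injective
    rw [h, e.apply_symm_apply, this, map_zero]
  · ext
    exact he q x

variable (R) in
lemma SL_ker_lTensor (M : Type) [AddCommGroup M] [Module Q M] [Module R M] [IsScalarTower Q R M]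
    (u : X →ₗ[Q] X') : SL Q R (LinearMap.ker (u.lTensor M))
      (LinearMap.ker ((u.baseChange R).lTensor M)) := by
  refine SL_ker _ _ (AlgebraTensorModule.cancelBaseChange Q R R M X).symm.toAddEquiv ?_
    (AlgebraTensorModule.cancelBaseChange Q R R M X').symm.toAddEquiv ?_
  · intro q x
    rw [← algebraMap_smul R q x]
    exact (AlgebraTensorModule.cancelBaseChange Q R R M X).symm.map_smul _ _
  · intro x
    induction x with
    | zero => simp
    | add x y hx hy => simp only [map_add, hx, hy]
    | tmul a x =>
      change (AlgebraTensorModule.cancelBaseChange Q R R M X').symm (a ⊗ₜ u x) =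
        (u.baseChange R).lTensor M ((AlgebraTensorModule.cancelBaseChange Q R R M X).symm (a ⊗ₜ x))
      simp [AlgebraTensorModule.cancelBaseChange_symm_tmul]

variable [IsLocalRing Q] [IsLocalRing R]
lemma residue_equiv (hs : Function.Surjective (algebraMap Q R)) : ∃ ρ : ResidueField Q ≃+* ResidueField R,
    ∀ q, ρ (residue Q q) = residue R (algebraMap Q R q) := by
  have : IsLocalHom (algebraMap Q R) := IsLocalHom.of_surjective _ hs
  refine ⟨RingEquiv.ofBijective (ResidueField.map (algebraMap Q R)) ⟨RingHom.injective _, ?_⟩,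
    fun q => rfl⟩
  intro y
  obtain ⟨r, rfl⟩ := residue_surjective y
  obtain ⟨q, rfl⟩ := hs r
  exact ⟨residue Q q, rfl⟩

lemma residue_linearEquiv (hs : Function.Surjective (algebraMap Q R)) : ∃ (ρ : ResidueField Q ≃+* ResidueField R)
    (ρ' : ResidueField Q ≃ₗ[Q] ResidueField R), (∀ x, ρ' x = ρ x) ∧ 
    ∀ q, ρ (residue Q q) = residue R (algebraMap Q R q) := by
  obtain ⟨ρ, hρ⟩ := residue_equiv hs
  refine ⟨ρ, { ρ.toAddEquiv with map_smul' := ?_ }, fun _ => rfl, hρ⟩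
  intro q x
  change ρ (q • x) = q • ρ x
  rw [Algebra.smul_def, map_mul, ← algebraMap_smul R q (ρ x), Algebra.smul_def]
  exact congrArg (· * ρ x) (hρ q)

lemma dd_SL (hs : Function.Surjective (algebraMap Q R)) (h : SL Q R X Y) : dd Q X = dd R Y := by
  obtain ⟨e, he⟩ := h
  let : Module Q Y := Module.compHom Y (algebraMap Q R)
  have : IsScalarTower Q R Y := ⟨fun q r y => by
    rw [Algebra.smul_def, mul_smul]; rfl⟩
  let e1 : X ≃ₗ[Q] Y := { e with map_smul' := he }
  rw [dd_congr e1]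
  obtain ⟨ρ, ρ', hρ', hρ⟩ := residue_linearEquiv hs
  have c1 : TensorProduct.CompatibleSMul Q R (ResidueField R) Y := .of_algebraMap_surjective _ _ hs
  let j1 : ResidueField Q ⊗[Q] Y ≃ₗ[Q] ResidueField R ⊗[Q] Y :=
    TensorProduct.congr ρ' (LinearEquiv.refl Q Y)
  let j2 : ResidueField R ⊗[R] Y ≃ₗ[ResidueField R] ResidueField R ⊗[Q] Y :=
    TensorProduct.equivOfCompatibleSMul Q R (ResidueField R) (ResidueField R) Y
  unfold dd
  rw [LinearEquiv.finrank_eq j2]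
  refine congrArg Cardinal.toNat (rank_eq_of_equiv_equiv ρ j1.toAddEquiv ρ.bijective ?_)
  intro r x
  change j1 (r • x) = ρ r • j1 x
  induction x with
  | zero => simp
  | add x y hx hy => rw [smul_add, map_add, map_add, smul_add, hx, hy]
  | tmul s y => simp [j1, TensorProduct.smul_tmul', hρ']
end

section Quot
variable {Q : Type} [CommRing Q] (f : Q)


lemma one_tmul_eq_zero {N : Type} [AddCommGroup N] [Module Q N] (y : N)
    (h : (1 : (Q ⧸ Ideal.span {f})) ⊗ₜ[Q] y = 0) : ∃ z : N, y = f • z := by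
  have h1 := congrArg (TensorProduct.quotTensorEquivQuotSMul N (Ideal.span {f})) h
  rw [map_zero, ← map_one (Ideal.Quotient.mk (Ideal.span {f})),
    TensorProduct.quotTensorEquivQuotSMul_mk_tmul, one_smul,
    Submodule.Quotient.mk_eq_zero, Submodule.ideal_span_singleton_smul] at h1
  obtain ⟨z, -, hz⟩ := (Submodule.mem_smul_pointwise_iff_exists _ _ _).1 h1
  exact ⟨z, hz.symm⟩

lemma algebraMap_f : algebraMap Q (Q ⧸ Ideal.span {f}) f = 0 :=
  Ideal.Quotient.eq_zero_iff_mem.2 (Ideal.mem_span_singleton_self f)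

lemma one_tmul_smul {N : Type} [AddCommGroup N] [Module Q N] (y : N) :
    (1 : (Q ⧸ Ideal.span {f})) ⊗ₜ[Q] (f • y) = 0 := by
  rw [← TensorProduct.smul_tmul, Algebra.smul_def, algebraMap_f, zero_mul, TensorProduct.zero_tmul]

lemma surj_quot : Function.Surjective (algebraMap Q (Q ⧸ Ideal.span {f})) := Ideal.Quotient.mk_surjective

lemma exists_one_tmul {N : Type} [AddCommGroup N] [Module Q N] (x : (Q ⧸ Ideal.span {f}) ⊗[Q] N) :
    ∃ y : N, x = 1 ⊗ₜ y := by
  induction x with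
  | zero => exact ⟨0, by simp⟩
  | add x y hx hy =>
    obtain ⟨a, rfl⟩ := hx
    obtain ⟨b, rfl⟩ := hy
    exact ⟨a + b, by rw [TensorProduct.tmul_add]⟩
  | tmul r y =>
    obtain ⟨q, rfl⟩ := surj_quot f r
    exact ⟨q • y, by rw [← TensorProduct.smul_tmul, Algebra.smul_def, mul_one]⟩

lemma baseChange_injective {K F N : Type} [AddCommGroup K] [Module Q K] [AddCommGroup F]
    [Module Q F] [AddCommGroup N] [Module Q N] (ι : K →ₗ[Q] F) (π : F →ₗ[Q] N)
    (hι : Function.Injective ι) (hex : Function.Exact ι π) (hN : ∀ x : N, f • x = 0 → x = 0) :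
    Function.Injective (ι.baseChange (Q ⧸ Ideal.span {f})) := by
  rw [injective_iff_map_eq_zero]
  intro x hx
  obtain ⟨y, rfl⟩ := exists_one_tmul f x
  rw [LinearMap.baseChange_tmul] at hx
  obtain ⟨z, hz⟩ := one_tmul_eq_zero f _ hx
  have h1 : π z = 0 := by
    apply hN
    rw [← map_smul, ← hz, hex.apply_apply_eq_zero]
  obtain ⟨w, rfl⟩ := (hex z).1 h1
  rw [← map_smul] at hz
  rw [hι hz, one_tmul_smul]

lemma baseChange_exact {K F N : Type} [AddCommGroup K] [Module Q K] [AddCommGroup F]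
    [Module Q F] [AddCommGroup N] [Module Q N] (ι : K →ₗ[Q] F) (π : F →ₗ[Q] N)
    (hex : Function.Exact ι π) (hπ : Function.Surjective π) :
    Function.Exact (ι.baseChange (Q ⧸ Ideal.span {f})) (π.baseChange (Q ⧸ Ideal.span {f})) :=
  lTensor_exact _ hex hπ

lemma presentation (hreg : ∀ x : Q, x * f = 0 → x = 0) (N : Type) [AddCommGroup N] [Module Q N] :
    ∃ (K F : Type) (_ : AddCommGroup K) (_ : AddCommGroup F) (_ : Module Q K) (_ : Module Q F)
      (_ : Module.Projective Q F) (ι : K →ₗ[Q] F) (π : F →ₗ[Q] N), Function.Injective ι ∧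
      Function.Surjective π ∧ Function.Exact ι π ∧ ∀ x : K, f • x = 0 → x = 0 := by
  let π : (N →₀ Q) →ₗ[Q] N := Finsupp.linearCombination Q id
  refine ⟨LinearMap.ker π, N →₀ Q, inferInstance, inferInstance, inferInstance, inferInstance,
    inferInstance, (LinearMap.ker π).subtype, π, Submodule.injective_subtype _,
    Finsupp.linearCombination_id_surjective Q N, LinearMap.exact_subtype_ker_map π, ?_⟩
  intro x hx
  apply Subtype.ext
  ext a
  have hx' : f • (x : N →₀ Q) = 0 := congrArg Subtype.val hx
  have h2 : f * (x : N →₀ Q) a = 0 := DFunLike.congr_fun hx' a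
  exact hreg _ (by rw [mul_comm, h2])

/-- Change of rings. -/
lemma change_rings (hreg : ∀ x : Q, x * f = 0 → x = 0) (M : Type) [AddCommGroup M] [Module Q M] [Module (Q ⧸ Ideal.span {f}) M] [IsScalarTower Q (Q ⧸ Ideal.span {f}) M]
    (n : ℕ) : ∀ (N : Type) [AddCommGroup N] [Module Q N], (∀ x : N, f • x = 0 → x = 0) →
    SL Q (Q ⧸ Ideal.span {f}) (T Q n M N) (T (Q ⧸ Ideal.span {f}) n M ((Q ⧸ Ideal.span {f}) ⊗[Q] N)) := by
  induction n using Nat.strong_induction_on with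
  | _ n ih =>
    intro N _ _ hN
    obtain ⟨K, F, _, _, _, _, _, ι, π, hι, hπ, hex, hK⟩ := presentation f hreg N
    have hι' := baseChange_injective f ι π hι hex hN
    have hπ' : Function.Surjective (π.baseChange (Q ⧸ Ideal.span {f})) := LinearMap.lTensor_surjective _ hπ
    have hex' : Function.Exact (ι.baseChange (Q ⧸ Ideal.span {f})) (π.baseChange (Q ⧸ Ideal.span {f})) :=
      baseChange_exact f ι π hex hπ
    match n with
    | 0 =>
      obtain ⟨a⟩ := T_zero Q M N
      obtain ⟨b⟩ := T_zero (Q ⧸ Ideal.span {f}) M ((Q ⧸ Ideal.span {f}) ⊗[Q] N)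
      exact (SL.of_linear (AlgebraTensorModule.cancelBaseChange Q (Q ⧸ Ideal.span {f}) (Q ⧸ Ideal.span {f}) M N).symm).trans a b.symm
    | 1 =>
      obtain ⟨a⟩ := T_one Q M ι π hι hπ hex
      obtain ⟨b⟩ := T_one (Q ⧸ Ideal.span {f}) M _ _ hι' hπ' hex'
      exact (SL_ker_lTensor (Q ⧸ Ideal.span {f}) M ι).trans a b.symm
    | n + 2 =>
      obtain ⟨a⟩ := T_succ Q M ι π hι hπ hex n
      obtain ⟨b⟩ := T_succ (Q ⧸ Ideal.span {f}) M _ _ hι' hπ' hex' n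
      exact (ih (n + 1) (by omega) K hK).trans a b.symm

variable [IsLocalRing Q] [IsLocalRing (Q ⧸ Ideal.span {f})]

lemma split (hfm : f ∈ maximalIdeal Q) (hfm2 : f ∉ maximalIdeal Q ^ 2) :
    ∃ e : (Q ⧸ Ideal.span {f}) ⊗[Q] maximalIdeal Q ≃ₗ[(Q ⧸ Ideal.span {f})] (ResidueField (Q ⧸ Ideal.span {f}) × maximalIdeal (Q ⧸ Ideal.span {f})),
      ∀ x : maximalIdeal Q, ((e (1 ⊗ₜ x)).2 : (Q ⧸ Ideal.span {f})) = algebraMap Q (Q ⧸ Ideal.span {f}) x := by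
  have hs := surj_quot f
  have : IsLocalHom (algebraMap Q (Q ⧸ Ideal.span {f})) := IsLocalHom.of_surjective _ hs
  obtain ⟨ρ, ρ', hρ', hρ⟩ := residue_linearEquiv hs
  let f' : maximalIdeal Q := ⟨f, hfm⟩
  let v : CotangentSpace Q := (maximalIdeal Q).toCotangent f'
  have hv : v ≠ 0 := fun h => hfm2 (((maximalIdeal Q).toCotangent_eq_zero f').1 h)
  obtain ⟨g, hg⟩ : ∃ g : Module.Dual (ResidueField Q) (CotangentSpace Q), g v ≠ 0 := by
    by_contra! h
    exact hv ((Module.forall_dual_apply_eq_zero_iff (ResidueField Q) v).1 h)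
  let φ : maximalIdeal Q →ₗ[Q] ResidueField (Q ⧸ Ideal.span {f}) :=
    ρ'.toLinearMap ∘ₗ (((g v)⁻¹ • g).restrictScalars Q) ∘ₗ (maximalIdeal Q).toCotangent
  have hφ : φ f' = 1 := by
    change ρ' ((g v)⁻¹ * g v) = 1
    rw [inv_mul_cancel₀ hg, hρ', map_one]
  have hmem : ∀ q, algebraMap Q (Q ⧸ Ideal.span {f}) q ∈ maximalIdeal (Q ⧸ Ideal.span {f}) ↔ q ∈ maximalIdeal Q := by
    intro q
    rw [mem_maximalIdeal, mem_maximalIdeal, mem_nonunits_iff, mem_nonunits_iff,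
      isUnit_map_iff]
  let j : maximalIdeal Q →ₗ[Q] maximalIdeal (Q ⧸ Ideal.span {f}) :=
    { toFun := fun x => ⟨algebraMap Q (Q ⧸ Ideal.span {f}) x, (hmem x).2 x.2⟩
      map_add' := fun x y => by ext; simp
      map_smul' := fun q x => by ext; simp [Algebra.smul_def] }
  let ψ : (Q ⧸ Ideal.span {f}) ⊗[Q] maximalIdeal Q →ₗ[(Q ⧸ Ideal.span {f})] (ResidueField (Q ⧸ Ideal.span {f}) × maximalIdeal (Q ⧸ Ideal.span {f})) :=
    LinearMap.liftBaseChange (Q ⧸ Ideal.span {f}) (φ.prod j)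
  have hψ : ∀ (r : (Q ⧸ Ideal.span {f})) x, ψ (r ⊗ₜ x) = r • (φ x, j x) := fun r x => by
    simp [ψ, LinearMap.liftBaseChange_tmul]
  have hjf : j f' = 0 := Subtype.ext (algebraMap_f f)
  refine ⟨LinearEquiv.ofBijective ψ ⟨?_, ?_⟩, ?_⟩
  · rw [injective_iff_map_eq_zero]
    intro x hx
    obtain ⟨y, rfl⟩ := exists_one_tmul f x
    rw [hψ, one_smul, Prod.mk_eq_zero] at hx
    obtain ⟨h1, h2⟩ := hx
    have h3 : algebraMap Q (Q ⧸ Ideal.span {f}) y = 0 := congrArg Subtype.val h2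
    obtain ⟨c, hc⟩ := Ideal.mem_span_singleton.1 (Ideal.Quotient.eq_zero_iff_mem.1 h3)
    have hy : y = c • f' := Subtype.ext (by rw [hc, mul_comm]; rfl)
    have hcm : c ∈ maximalIdeal Q := by
      rw [hy, map_smul, hφ, ← algebraMap_smul (Q ⧸ Ideal.span {f}) c (1 : ResidueField (Q ⧸ Ideal.span {f})), Algebra.smul_def,
        mul_one] at h1
      exact (hmem c).1 ((residue_eq_zero_iff _).1 h1)
    have hy' : y = f • (⟨c, hcm⟩ : maximalIdeal Q) := Subtype.ext hc
    rw [hy', one_tmul_smul]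
  · rintro ⟨a, ⟨b, hb⟩⟩
    obtain ⟨x, rfl⟩ := hs b
    let x' : maximalIdeal Q := ⟨x, (hmem x).1 hb⟩
    obtain ⟨c, hc⟩ := residue_surjective (a - φ x')
    refine ⟨1 ⊗ₜ x' + c ⊗ₜ f', ?_⟩
    rw [map_add, hψ, hψ, hφ, hjf, one_smul]
    ext
    · change φ x' + c • (1 : ResidueField (Q ⧸ Ideal.span {f})) = a
      rw [Algebra.smul_def, mul_one]
      change φ x' + residue (Q ⧸ Ideal.span {f}) c = a
      rw [hc]; ring
    · simp [x', j]
  · intro x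
    change ((ψ (1 ⊗ₜ x)).2 : (Q ⧸ Ideal.span {f})) = _
    rw [hψ, one_smul]
    rfl

lemma ker_snd {A : Type} [CommRing A] {X Y Z : Type} [AddCommGroup X] [Module A X]
    [AddCommGroup Y] [Module A Y] [AddCommGroup Z] [Module A Z] (l : Y →ₗ[A] Z) :
    Nonempty (LinearMap.ker (l ∘ₗ LinearMap.snd A X Y) ≃ₗ[A] (X × LinearMap.ker l)) :=
  ⟨{ toFun := fun x => (x.1.1, ⟨x.1.2, x.2⟩)
     invFun := fun y => ⟨(y.1, y.2.1), y.2.2⟩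
     left_inv := fun x => rfl
     right_inv := fun x => rfl
     map_add' := fun x y => rfl
     map_smul' := fun x y => rfl }⟩

lemma SL_one (hfm : f ∈ maximalIdeal Q) (hfm2 : f ∉ maximalIdeal Q ^ 2)
    (M : Type) [AddCommGroup M] [Module Q M] [Module (Q ⧸ Ideal.span {f}) M] [IsScalarTower Q (Q ⧸ Ideal.span {f}) M] :
    SL Q (Q ⧸ Ideal.span {f}) (LinearMap.ker ((maximalIdeal Q).subtype.lTensor M))
      (LinearMap.ker ((maximalIdeal (Q ⧸ Ideal.span {f})).subtype.lTensor M ∘ₗ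
        LinearMap.snd (Q ⧸ Ideal.span {f}) (M ⊗[(Q ⧸ Ideal.span {f})] ResidueField (Q ⧸ Ideal.span {f})) (M ⊗[(Q ⧸ Ideal.span {f})] maximalIdeal (Q ⧸ Ideal.span {f})))) := by
  obtain ⟨s, hs⟩ := split f hfm hfm2
  let e : M ⊗[Q] maximalIdeal Q ≃ₗ[(Q ⧸ Ideal.span {f})] (M ⊗[(Q ⧸ Ideal.span {f})] ResidueField (Q ⧸ Ideal.span {f})) × (M ⊗[(Q ⧸ Ideal.span {f})] maximalIdeal (Q ⧸ Ideal.span {f})) :=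
    (AlgebraTensorModule.cancelBaseChange Q (Q ⧸ Ideal.span {f}) (Q ⧸ Ideal.span {f}) M (maximalIdeal Q)).symm ≪≫ₗ
      TensorProduct.congr (LinearEquiv.refl (Q ⧸ Ideal.span {f}) M) s ≪≫ₗ
      TensorProduct.prodRight (Q ⧸ Ideal.span {f}) (Q ⧸ Ideal.span {f}) M (ResidueField (Q ⧸ Ideal.span {f})) (maximalIdeal (Q ⧸ Ideal.span {f}))
  refine SL_ker _ _ e.toAddEquiv ?_ ((TensorProduct.rid Q M).toAddEquiv.trans
    (TensorProduct.rid (Q ⧸ Ideal.span {f}) M).symm.toAddEquiv) ?_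
  · intro q x
    rw [← algebraMap_smul (Q ⧸ Ideal.span {f}) q x]
    exact e.map_smul _ _
  · intro x
    induction x with
    | zero => simp
    | add x y hx hy => simp only [map_add, hx, hy]
    | tmul a x =>
      apply (TensorProduct.rid (Q ⧸ Ideal.span {f}) M).injective
      have h1 : e (a ⊗ₜ x) = (a ⊗ₜ (s (1 ⊗ₜ x)).1, a ⊗ₜ (s (1 ⊗ₜ x)).2) := by
        simp [e, AlgebraTensorModule.cancelBaseChange_symm_tmul]
      change TensorProduct.rid (Q ⧸ Ideal.span {f}) M ((TensorProduct.rid (Q ⧸ Ideal.span {f}) M).symm (TensorProduct.rid Q M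
        (a ⊗ₜ (x : Q)))) = TensorProduct.rid (Q ⧸ Ideal.span {f}) M ((maximalIdeal (Q ⧸ Ideal.span {f})).subtype.lTensor M
          (e (a ⊗ₜ x)).2)
      rw [h1, LinearEquiv.apply_symm_apply]
      simp [hs]
      exact (algebraMap_smul (Q ⧸ Ideal.span {f}) (x : Q) a).symm

lemma residue_ses (A : Type) [CommRing A] [IsLocalRing A] :
    Function.Injective (maximalIdeal A).subtype ∧
    Function.Surjective (Algebra.linearMap A (ResidueField A)) ∧
    Function.Exact (maximalIdeal A).subtype (Algebra.linearMap A (ResidueField A)) := by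
  refine ⟨Submodule.injective_subtype _, residue_surjective, fun x => ?_⟩
  refine (residue_eq_zero_iff x).trans ?_
  simp

theorem main [IsNoetherianRing Q] (hfm : f ∈ maximalIdeal Q) (hfm2 : f ∉ maximalIdeal Q ^ 2)
    (hreg : ∀ x : Q, x * f = 0 → x = 0)
    (M : Type) [AddCommGroup M] [Module Q M] [Module (Q ⧸ Ideal.span {f}) M] [IsScalarTower Q (Q ⧸ Ideal.span {f}) M]
    [Module.Finite (Q ⧸ Ideal.span {f}) M] (i : ℕ) :
    dd Q (T Q i M (ResidueField Q)) = dd (Q ⧸ Ideal.span {f}) (T (Q ⧸ Ideal.span {f}) i M (ResidueField (Q ⧸ Ideal.span {f}))) +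
      (if i = 0 then 0 else dd (Q ⧸ Ideal.span {f}) (T (Q ⧸ Ideal.span {f}) (i - 1) M (ResidueField (Q ⧸ Ideal.span {f})))) := by
  have hs := surj_quot f
  obtain ⟨i1, s1, e1⟩ := residue_ses Q
  obtain ⟨i2, s2, e2⟩ := residue_ses (Q ⧸ Ideal.span {f})
  have fin : ∀ n, Module.Finite (Q ⧸ Ideal.span {f}) (T (Q ⧸ Ideal.span {f}) n M (ResidueField (Q ⧸ Ideal.span {f}))) := fun n => T_finite (Q ⧸ Ideal.span {f}) M n _
  match i with
  | 0 =>
    simp only [if_true, add_zero]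
    obtain ⟨a⟩ := T_zero Q M (ResidueField Q)
    obtain ⟨b⟩ := T_zero (Q ⧸ Ideal.span {f}) M (ResidueField (Q ⧸ Ideal.span {f}))
    obtain ⟨ρ, ρ', hρ', hρ⟩ := residue_linearEquiv hs
    have c1 : TensorProduct.CompatibleSMul Q (Q ⧸ Ideal.span {f}) M (ResidueField (Q ⧸ Ideal.span {f})) :=
      .of_algebraMap_surjective _ _ hs
    let j2 : M ⊗[(Q ⧸ Ideal.span {f})] ResidueField (Q ⧸ Ideal.span {f}) ≃ₗ[(Q ⧸ Ideal.span {f})] M ⊗[Q] ResidueField (Q ⧸ Ideal.span {f}) :=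
      TensorProduct.equivOfCompatibleSMul Q (Q ⧸ Ideal.span {f}) (Q ⧸ Ideal.span {f}) M (ResidueField (Q ⧸ Ideal.span {f}))
    exact dd_SL hs ((SL.of_linear j2.symm).trans
      (a ≪≫ₗ TensorProduct.congr (LinearEquiv.refl Q M) ρ') b.symm)
  | 1 =>
    obtain ⟨a⟩ := T_one Q M _ _ i1 s1 e1
    obtain ⟨b⟩ := T_one (Q ⧸ Ideal.span {f}) M _ _ i2 s2 e2
    obtain ⟨c⟩ := T_zero (Q ⧸ Ideal.span {f}) M (ResidueField (Q ⧸ Ideal.span {f}))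
    obtain ⟨d⟩ := ker_snd (X := M ⊗[(Q ⧸ Ideal.span {f})] ResidueField (Q ⧸ Ideal.span {f})) ((maximalIdeal (Q ⧸ Ideal.span {f})).subtype.lTensor M)
    rw [dd_SL hs ((SL_one f hfm hfm2 M).trans a (d ≪≫ₗ c.symm.prodCongr b.symm)), dd_prod,
      add_comm]
    rfl
  | n + 2 =>
    obtain ⟨a⟩ := T_succ Q M _ _ i1 s1 e1 n
    obtain ⟨b⟩ := T_succ (Q ⧸ Ideal.span {f}) M _ _ i2 s2 e2 n
    obtain ⟨s, -⟩ := split f hfm hfm2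
    obtain ⟨c⟩ := T_congr (Q ⧸ Ideal.span {f}) M (n + 1) s
    obtain ⟨d⟩ := T_prod (Q ⧸ Ideal.span {f}) M (ResidueField (Q ⧸ Ideal.span {f})) (maximalIdeal (Q ⧸ Ideal.span {f})) (n + 1)
    have h := change_rings f hreg M (n + 1) (maximalIdeal Q) (by
      intro x hx
      have h1 : f * (x : Q) = 0 := congrArg Subtype.val hx
      exact Subtype.ext (hreg _ (by rw [mul_comm, h1])))
    rw [dd_SL hs (h.trans a (c ≪≫ₗ d ≪≫ₗ (LinearEquiv.refl _ _).prodCongr b.symm)), dd_prod,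
      add_comm]
    rfl
end Quot
end Sum
end Nagata


/-- **Nagata's equality, `n = 1`.** Let `f ∈ m ∖ m²` be a regular element
(nonzerodivisor) of a Noetherian local ring `Q` and set `R = Q/(f)`. Then for
every finitely generated `R`-module `M` and all `i ≥ 0`,
`β_i^Q(M) = β_i^R(M) + β_{i−1}^R(M)` (with `β_{−1}^R(M) = 0`), i.e.
`P_M^Q(t) = (1+t)·P_M^R(t)`. -/
theorem betti_base_eq_of_regular_element
    (Q : Type) [CommRing Q] [IsNoetherianRing Q] [IsLocalRing Q]
    (f : Q) (hfm : f ∈ IsLocalRing.maximalIdeal Q)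
    (hfm2 : f ∉ (IsLocalRing.maximalIdeal Q) ^ 2)
    (hreg : ∀ x : Q, x * f = 0 → x = 0)
    [IsLocalRing (Q ⧸ Ideal.span {f})]
    (M : Type) [AddCommGroup M] [Module Q M] [Module (Q ⧸ Ideal.span {f}) M]
    [IsScalarTower Q (Q ⧸ Ideal.span {f}) M]
    [Module.Finite (Q ⧸ Ideal.span {f}) M]
    (i : ℕ) :
    bettiNumber Q M i =
      bettiNumber (Q ⧸ Ideal.span {f}) M i +
        (if i = 0 then 0 else bettiNumber (Q ⧸ Ideal.span {f}) M (i - 1)) := by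
  exact Nagata.main f hfm hfm2 hreg M i
end
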